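/- arXiv:2312.10433 — 5 statements merged into one kernel-verified Lean document; each statement's English description precedes it below -/
import Mathlib

section
/- Let d ≥ 3 and let I = I_3(H) ⊆ S = ℂ[m_0,…,m_d]. Let ≼ be a monomial order on the exponent vectors of S such that for every choice of columns 1 ≤ i < j < k ≤ d, the leading monomial of the corresponding 3×3 minor of H with respect to ≼ is its antidiagonal monomial, i.e., the product of the (1,k), (2,j) and (3,i) entries of H (for example, the degree reverse lexicographic order with m_0 > m_1 > ⋯ > m_d has this property). Then the 3×3 minors of H form a Gröbner basis of I with respect to ≼: for every nonzero f ∈ I, the leading monomial of f is divisible by the leading monomial of some 3×3 minor of H. -/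
open MvPolynomial

/-- The `3 × d` matrix `H` of the inverse Gaussian moment variety: its first column is
`(m₀², 0, m₁²)ᵀ`, and its `c`-th column, for `2 ≤ c ≤ d`, is
`(m_{c-2}, (2c-3)·m_{c-1}, m_c)ᵀ`.  Columns are indexed by `Fin d`, with `c : Fin d`
corresponding to the paper's column `c + 1`. -/
noncomputable def invGaussMatrix (d : ℕ) :
    Matrix (Fin 3) (Fin d) (MvPolynomial (Fin (d + 1)) ℂ) :=
  Matrix.of fun r c =>
    if c.val = 0 then
      ![X ⟨0, by omega⟩ ^ 2, 0, X ⟨1, by have := c.isLt; omega⟩ ^ 2] r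
    else
      ![X ⟨c.val - 1, by have := c.isLt; omega⟩,
        C (2 * (c.val : ℂ) - 1) * X ⟨c.val, by have := c.isLt; omega⟩,
        X ⟨c.val + 1, by have := c.isLt; omega⟩] r

/-- The ideal `I₃(H)` generated by all `3 × 3` minors of `H`, i.e. determinants of
submatrices obtained by choosing `3` of the `d` columns. -/
noncomputable def invGaussIdeal (d : ℕ) : Ideal (MvPolynomial (Fin (d + 1)) ℂ) :=
  Ideal.span
    { p | ∃ s : Fin 3 → Fin d, StrictMono s ∧ p = ((invGaussMatrix d).submatrix id s).det }

/-!
Fix an exponent vector `w`. Buchberger's criterion holds once any two generators whose leading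
monomials divide `w` have, up to nonzero scalars, the same monomial multiple of degree `w` modulo
multiples of generators of smaller degree. For the minors on columns `i < j < k` and `i < j < l`
this is read off the `4 × 4` determinant on the columns `i, j, k, l` with the first row of `H`
repeated, which vanishes: two of the four terms of its expansion form the S-polynomial, and the
other two are of smaller degree. The second and third rows serve to move the middle and the first
column. Any two minors with leading monomials dividing `w` are joined by such moves: the entries
that an intermediate antidiagonal takes from the first minor and those it takes from the second
involve different variables, so that it divides `w` as well.
-/

/-- The monomial order given by a translation-invariant linear order with least element `0`,
well-founded by Dickson's lemma. -/
noncomputable def monomialOrderOfRel {σ : Type*} [Finite σ]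
    (r : (σ →₀ ℕ) → (σ →₀ ℕ) → Prop) (hlin : IsLinearOrder _ r)
    (hadd : ∀ a b c, r a b → r (a + c) (b + c)) (hzero : ∀ a, r 0 a) : MonomialOrder σ :=
  letI order : LinearOrder (σ →₀ ℕ) :=
    { le := r
      lt := fun a b => r a b ∧ ¬ r b a
      le_refl := hlin.refl
      le_trans := hlin.trans
      lt_iff_le_not_ge := fun _ _ => Iff.rfl
      le_antisymm := hlin.antisymm
      le_total := hlin.total
      toDecidableLE := Classical.decRel r
      min := fun a b => open Classical in if r a b then a else b
      max := fun a b => open Classical in if r a b then b else a }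
  have r_of_le {a b : σ →₀ ℕ} (h : ∀ i, a i ≤ b i) : r a b := by
    simpa only [zero_add, tsub_add_cancel_of_le (Finsupp.le_def.mpr h)]
      using hadd 0 (b - a) a (hzero _)
  { syn := σ →₀ ℕ
    linearOrderSyn := order
    isOrderedAddMonoid_syn :=
      @IsOrderedAddMonoid.mk (σ →₀ ℕ) _ order.toPreorder
        (fun a b h c => hadd a b c h)
        (fun a b h c => by rw [add_comm c, add_comm c]; exact hadd a b c h)
    toSyn := AddEquiv.refl _
    toSyn_monotone := fun _ _ h => r_of_le h
    wellFoundedLT_syn := by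
      refine ⟨WellQuasiOrdered.wellFounded (r := r) fun f => ?_⟩
      obtain ⟨i, j, hij, hle⟩ := wellQuasiOrdered_le (α := σ →₀ ℕ) f
      exact ⟨i, j, hij, r_of_le hle⟩ }

theorem monomialOrderOfRel_le_iff {σ : Type*} [Finite σ]
    {r : (σ →₀ ℕ) → (σ →₀ ℕ) → Prop} {hlin : IsLinearOrder _ r}
    {hadd : ∀ a b c, r a b → r (a + c) (b + c)} {hzero : ∀ a, r 0 a} {a b : σ →₀ ℕ} :
    (monomialOrderOfRel r hlin hadd hzero).toSyn a ≤
      (monomialOrderOfRel r hlin hadd hzero).toSyn b ↔ r a b :=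
  Iff.rfl

theorem add_add_le_of_disjoint {α : Type*} {u a b w : α →₀ ℕ} (hab : Disjoint a b)
    (ha : u + a ≤ w) (hb : u + b ≤ w) : u + (a + b) ≤ w := by
  intro x
  have hx : a x = 0 ∨ b x = 0 := by
    have : x ∈ a.support → x ∉ b.support :=
      fun hxa => Finset.disjoint_left.1 (Finsupp.disjoint_iff.1 hab) hxa
    simpa only [Finsupp.mem_support_iff, not_not, or_iff_not_imp_left] using this
  have hax := ha x
  have hbx := hb x
  simp only [Finsupp.add_apply] at hax hbx ⊢
  omega

theorem span_singleton_sup_le {K V : Type*} [Field K] [AddCommGroup V] [Module K V]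
    {W : Submodule K V} {x y : V} {a b : K} (ha : a ≠ 0) (h : a • x - b • y ∈ W) :
    Submodule.span K {x} ⊔ W ≤ Submodule.span K {y} ⊔ W := by
  refine sup_le ((Submodule.span_singleton_le_iff_mem _ _).2 ?_) le_sup_right
  rw [← Submodule.smul_mem_iff _ ha, ← sub_add_cancel (a • x) (b • y)]
  exact add_mem (Submodule.mem_sup_right h)
    (Submodule.mem_sup_left (Submodule.smul_mem _ b (Submodule.mem_span_singleton_self y)))

theorem span_singleton_sup_eq {K V : Type*} [Field K] [AddCommGroup V] [Module K V]
    {W : Submodule K V} {x y : V} {a b : K} (ha : a ≠ 0) (hb : b ≠ 0) (h : a • x - b • y ∈ W) :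
    Submodule.span K {x} ⊔ W = Submodule.span K {y} ⊔ W :=
  (span_singleton_sup_le ha h).antisymm <|
    span_singleton_sup_le (a := b) hb (by simpa only [neg_sub] using neg_mem h)

section Criterion
open Set MonomialOrder
variable {σ K : Type*} [Field K] (m : MonomialOrder σ) (B : Set (MvPolynomial σ K))

/-- The span of the monomial multiples `x^β g`, `g ∈ B`, with degree in `D`. -/
noncomputable def multiplesSpan (D : Set m.syn) : Submodule K (MvPolynomial σ K) :=
  Submodule.span K {p | ∃ g ∈ B, ∃ β, m.toSyn (β + m.degree g) ∈ D ∧ p = monomial β 1 * g}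

variable {m B}

theorem monomial_mul_mem_multiplesSpan {D : Set m.syn} {g : MvPolynomial σ K} (hg : g ∈ B)
    {β : σ →₀ ℕ} (hβ : m.toSyn (β + m.degree g) ∈ D) (c : K) :
    monomial β c * g ∈ multiplesSpan m B D := by
  have hc : monomial β c * g = c • (monomial β 1 * g) := by
    rw [← smul_mul_assoc, smul_monomial, smul_eq_mul, mul_one]
  exact hc ▸ Submodule.smul_mem _ c (Submodule.subset_span ⟨g, hg, β, hβ, rfl⟩)

theorem multiplesSpan_mono {D E : Set m.syn} (h : D ⊆ E) :
    multiplesSpan m B D ≤ multiplesSpan m B E :=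
  Submodule.span_mono fun _ ⟨g, hg, β, hβ, hp⟩ => ⟨g, hg, β, h hβ, hp⟩

theorem multiplesSpan_univ :
    multiplesSpan m B univ = (Ideal.span B).restrictScalars K := by
  have hmon : Submodule.span K (range fun β : σ →₀ ℕ => monomial β (1 : K)) = ⊤ := by
    simpa only [coe_basisMonomials] using (basisMonomials σ K).span_eq
  rw [Ideal.span, ← Submodule.span_smul_of_span_eq_top hmon, multiplesSpan]
  congr 1
  ext p
  simp only [mem_univ, true_and, mem_ofPred_eq, mem_smul, mem_range, smul_eq_mul]
  constructor
  · rintro ⟨g, hg, β, rfl⟩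
    exact ⟨_, ⟨β, rfl⟩, g, hg, rfl⟩
  · rintro ⟨_, ⟨β, rfl⟩, g, hg, rfl⟩
    exact ⟨g, hg, β, rfl⟩

theorem exists_mem_multiplesSpan_Iic {D : Set m.syn} {f : MvPolynomial σ K}
    (hf : f ∈ multiplesSpan m B D) (hf0 : f ≠ 0) :
    ∃ v ∈ D, f ∈ multiplesSpan m B (Iic v) := by
  suffices f = 0 ∨ ∃ v ∈ D, f ∈ multiplesSpan m B (Iic v) from this.resolve_left hf0
  clear hf0
  induction hf using Submodule.span_induction with
  | mem p hp =>
    obtain ⟨g, hg, β, hβ, rfl⟩ := hp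
    exact .inr ⟨_, hβ, monomial_mul_mem_multiplesSpan hg self_mem_Iic 1⟩
  | zero => exact .inl rfl
  | add p q _ _ hp hq =>
    rcases hp with rfl | ⟨v, hv, hp⟩
    · rwa [zero_add]
    rcases hq with rfl | ⟨u, hu, hq⟩
    · rw [add_zero]
      exact .inr ⟨v, hv, hp⟩
    rcases le_total u v with huv | hvu
    · exact .inr ⟨v, hv, add_mem hp (multiplesSpan_mono (Iic_subset_Iic.2 huv) hq)⟩
    · exact .inr ⟨u, hu, add_mem (multiplesSpan_mono (Iic_subset_Iic.2 hvu) hp) hq⟩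
  | smul c p _ hp =>
    rcases hp with rfl | ⟨v, hv, hp⟩
    · exact .inl (smul_zero c)
    · exact .inr ⟨v, hv, Submodule.smul_mem _ c hp⟩

theorem degree_le_of_mem_multiplesSpan_Iic {v : m.syn} {f : MvPolynomial σ K}
    (hf : f ∈ multiplesSpan m B (Iic v)) : m.toSyn (m.degree f) ≤ v := by
  induction hf using Submodule.span_induction with
  | mem p hp =>
    obtain ⟨g, -, β, hβ, rfl⟩ := hp
    classical
    rw [map_add] at hβ
    calc m.toSyn (m.degree (monomial β 1 * g))
        ≤ m.toSyn (m.degree (monomial β (1 : K))) + m.toSyn (m.degree g) := by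
          simpa only [map_add] using m.degree_mul_le (f := monomial β (1 : K)) (g := g)
      _ ≤ m.toSyn β + m.toSyn (m.degree g) := by gcongr; exact m.degree_monomial_le 1
      _ ≤ v := hβ
  | zero => simp only [degree_zero, map_zero, MonomialOrder.zero_le]
  | add p q _ _ hp hq => exact m.degree_add_le.trans (sup_le hp hq)
  | smul c p _ hp => exact m.degree_smul_le.trans hp

theorem degree_lt_of_mem_multiplesSpan_Iio {w : m.syn} {f : MvPolynomial σ K}
    (hf : f ∈ multiplesSpan m B (Iio w)) (hf0 : f ≠ 0) : m.toSyn (m.degree f) < w :=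
  have ⟨_, hv, hfv⟩ := exists_mem_multiplesSpan_Iic hf hf0
  (degree_le_of_mem_multiplesSpan_Iic hfv).trans_lt hv

theorem monomial_mul_mem_multiplesSpan_Iio {w : σ →₀ ℕ} {f : MvPolynomial σ K}
    (hf : f ∈ multiplesSpan m B (Iio (m.toSyn w))) (γ : σ →₀ ℕ) :
    monomial γ 1 * f ∈ multiplesSpan m B (Iio (m.toSyn (γ + w))) := by
  induction hf using Submodule.span_induction with
  | mem p hp =>
    obtain ⟨g, hg, β, hβ, rfl⟩ := hp
    rw [← mul_assoc, monomial_mul, mul_one]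
    refine monomial_mul_mem_multiplesSpan hg ?_ 1
    rw [add_assoc]
    simpa only [map_add, mem_Iio, add_lt_add_iff_left] using hβ
  | zero => simp only [mul_zero, zero_mem]
  | add p q _ _ hp hq => simpa only [mul_add] using add_mem hp hq
  | smul c p _ hp => simpa only [mul_smul_comm] using Submodule.smul_mem _ c hp

variable (m B) in
/-- The line spanned by the monomial multiple of `g` of degree `w`, modulo the multiples of
elements of `B` of smaller degree; kept as a submodule containing the latter. It is meaningful only
for `m.degree g ≤ w`, the subtraction being truncated otherwise. -/
noncomputable def leadLine (w : σ →₀ ℕ) (g : MvPolynomial σ K) : Submodule K (MvPolynomial σ K) :=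
  Submodule.span K {monomial (w - m.degree g) 1 * g} ⊔ multiplesSpan m B (Iio (m.toSyn w))

theorem leadLine_eq_of_sub_mem {v w α β : σ →₀ ℕ} {g h : MvPolynomial σ K} {a b : K}
    (ha : a ≠ 0) (hb : b ≠ 0) (hα : α + m.degree g = v) (hβ : β + m.degree h = v)
    (hgh : monomial α a * g - monomial β b * h ∈ multiplesSpan m B (Iio (m.toSyn v)))
    (hvw : v ≤ w) : leadLine m B w g = leadLine m B w h := by
  obtain ⟨γ, rfl⟩ := exists_add_of_le hvw
  rw [add_comm]
  refine span_singleton_sup_eq ha hb ?_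
  have hg : γ + v - m.degree g = γ + α := tsub_eq_of_eq_add (by rw [← hα, add_assoc])
  have hh : γ + v - m.degree h = γ + β := tsub_eq_of_eq_add (by rw [← hβ, add_assoc])
  simpa only [hg, hh, mul_sub, ← mul_assoc, ← smul_mul_assoc, smul_monomial, monomial_mul,
    one_mul, smul_eq_mul, mul_one] using monomial_mul_mem_multiplesSpan_Iio hgh γ

/-- Here `u + (α + β)` is the least common multiple of the degrees `u + β` and `u + α`, so the
membership hypothesis is a condition on an S-polynomial. -/
theorem leadLine_eq_of_disjoint {u α β w : σ →₀ ℕ} {g h : MvPolynomial σ K} {a b : K}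
    (hαβ : Disjoint α β) (ha : a ≠ 0) (hb : b ≠ 0)
    (hg : m.degree g = u + β) (hh : m.degree h = u + α)
    (hgh : monomial α a * g - monomial β b * h ∈ multiplesSpan m B (Iio (m.toSyn (u + (α + β)))))
    (hgw : m.degree g ≤ w) (hhw : m.degree h ≤ w) : leadLine m B w g = leadLine m B w h :=
  leadLine_eq_of_sub_mem ha hb (by rw [hg, add_left_comm]) (by rw [hh, add_left_comm, add_comm β])
    hgh (add_add_le_of_disjoint hαβ (hh ▸ hhw) (hg ▸ hgw))

theorem multiplesSpan_Iic_le_leadLine {w : σ →₀ ℕ} {g : MvPolynomial σ K}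
    (h : ∀ g' ∈ B, m.degree g' ≤ w → leadLine m B w g' = leadLine m B w g) :
    multiplesSpan m B (Iic (m.toSyn w)) ≤ leadLine m B w g := by
  refine Submodule.span_le.2 ?_
  rintro _ ⟨g', hg', β, hβ, rfl⟩
  rcases (mem_Iic.1 hβ).lt_or_eq with hlt | heq
  · exact Submodule.mem_sup_right (monomial_mul_mem_multiplesSpan hg' hlt 1)
  · obtain rfl := m.toSyn.injective heq
    rw [SetLike.mem_coe, ← h g' hg' le_add_self, leadLine, add_tsub_cancel_right]
    exact Submodule.mem_sup_left (Submodule.mem_span_singleton_self _)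

theorem exists_mem_multiplesSpan_Iic_notMem_Iio {f : MvPolynomial σ K} (hf : f ∈ Ideal.span B)
    (hf0 : f ≠ 0) : ∃ w, f ∈ multiplesSpan m B (Iic (m.toSyn w)) ∧
      f ∉ multiplesSpan m B (Iio (m.toSyn w)) := by
  have hbound : {v | f ∈ multiplesSpan m B (Iic v)}.Nonempty := by
    have hfu : f ∈ multiplesSpan m B univ := by rwa [multiplesSpan_univ]
    obtain ⟨v, -, hv⟩ := exists_mem_multiplesSpan_Iic hfu hf0
    exact ⟨v, hv⟩
  obtain ⟨v, hfv, hmin⟩ := WellFounded.has_min (wellFounded_lt (α := m.syn)) _ hbound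
  obtain ⟨w, rfl⟩ := m.toSyn.surjective v
  refine ⟨w, hfv, fun hfw => ?_⟩
  obtain ⟨u, hu, hfu⟩ := exists_mem_multiplesSpan_Iic hfw hf0
  exact hmin u hfu hu

theorem degree_smul_monomial_mul_add {w : σ →₀ ℕ} {g p : MvPolynomial σ K} {c : K} (hc : c ≠ 0)
    (hg : g ≠ 0) (hgw : m.degree g ≤ w) (hp : p ∈ multiplesSpan m B (Iio (m.toSyn w))) :
    m.degree (c • (monomial (w - m.degree g) 1 * g) + p) = w := by
  have hlead : m.degree (c • (monomial (w - m.degree g) 1 * g)) = w := by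
    classical
    rw [degree_smul_of_isRegular (.of_ne_zero hc),
      degree_mul (monomial_eq_zero.not.2 one_ne_zero) hg, degree_monomial, if_neg one_ne_zero,
      tsub_add_cancel_of_le hgw]
  rcases eq_or_ne p 0 with rfl | hp0
  · rwa [add_zero]
  · rwa [degree_add_of_lt (hlead.symm ▸ degree_lt_of_mem_multiplesSpan_Iio hp hp0)]

/-- A form of Buchberger's criterion. -/
theorem exists_degree_le_degree_of_leadLine_eq
    (h : ∀ w, ∀ g ∈ B, ∀ g' ∈ B, m.degree g ≤ w → m.degree g' ≤ w →
      leadLine m B w g' = leadLine m B w g)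
    {f : MvPolynomial σ K} (hf : f ∈ Ideal.span B) (hf0 : f ≠ 0) :
    ∃ g ∈ B, m.degree g ≤ m.degree f := by
  obtain ⟨w, hfw, hfw'⟩ := exists_mem_multiplesSpan_Iic_notMem_Iio (m := m) hf hf0
  obtain ⟨g, hg, hgw⟩ : ∃ g ∈ B, m.degree g ≤ w := by
    by_contra! hnone
    refine hfw' (Submodule.span_mono ?_ hfw)
    rintro _ ⟨g, hg, β, hβ, rfl⟩
    refine ⟨g, hg, β, lt_of_le_of_ne hβ fun heq => hnone g hg ?_, rfl⟩
    exact m.toSyn.injective heq ▸ le_add_self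
  refine ⟨g, hg, ?_⟩
  obtain ⟨_, hy, p, hp, rfl⟩ := Submodule.mem_sup.1
    (multiplesSpan_Iic_le_leadLine (fun g' hg' => h w g hg g' hg' hgw) hfw)
  obtain ⟨c, rfl⟩ := Submodule.mem_span_singleton.1 hy
  have hc : c ≠ 0 := by
    rintro rfl
    exact hfw' (by simpa only [zero_smul, zero_add] using hp)
  rcases eq_or_ne g 0 with rfl | hg0
  · rw [degree_zero]
    exact zero_le
  · rwa [degree_smul_monomial_mul_add hc hg0 hgw hp]

end Criterion

/-- The `3 × 3` minor of `M` on the columns `i`, `j`, `k`. -/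
def minor {ι R : Type*} [CommRing R] (M : Matrix (Fin 3) ι R) (i j k : ι) : R :=
  (M.submatrix id ![i, j, k]).det

theorem minor_eq {ι R : Type*} [CommRing R] (M : Matrix (Fin 3) ι R) (i j k : ι) :
    minor M i j k = M 0 i * M 1 j * M 2 k - M 0 i * M 1 k * M 2 j - M 0 j * M 1 i * M 2 k
      + M 0 j * M 1 k * M 2 i + M 0 k * M 1 i * M 2 j - M 0 k * M 1 j * M 2 i := by
  rw [minor, Matrix.det_fin_three]
  rfl

/-- Expansion of the `4 × 4` determinant with row `r` of `M` repeated. -/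
theorem mul_minor_alternating_sum {ι R : Type*} [CommRing R] (M : Matrix (Fin 3) ι R) (r : Fin 3)
    (i j k l : ι) : M r i * minor M j k l - M r j * minor M i k l + M r k * minor M i j l
      - M r l * minor M i j k = 0 := by
  simp only [minor_eq]
  fin_cases r <;> dsimp only [Fin.zero_eta, Fin.mk_one, Fin.reduceFinMk] <;> ring

namespace InvGauss

variable {d : ℕ} {i j k l : Fin d}

/-- The exponent vector of the `(r, c)` entry of `invGaussMatrix d`. At the zero entry we choose
`m₀ m₁`, so that each row of the first column is `m₀ ^ (2 - r) * m₁ ^ r` up to a scalar. -/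
noncomputable def entryExp (r : Fin 3) (c : Fin d) : Fin (d + 1) →₀ ℕ :=
  Finsupp.equivFunOnFinite.symm fun x =>
    if c.val = 0 then if x.val = 0 then 2 - r.val else if x.val = 1 then r.val else 0
    else if x.val + 1 = c.val + r.val then 1 else 0

theorem entryExp_apply (r : Fin 3) (c : Fin d) (x : Fin (d + 1)) : entryExp r c x =
    if c.val = 0 then if x.val = 0 then 2 - r.val else if x.val = 1 then r.val else 0
    else if x.val + 1 = c.val + r.val then 1 else 0 := rfl

/-- The scalar in the `(r, c)` entry of `invGaussMatrix d`. -/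
noncomputable def entryCoeff (r : Fin 3) (c : Fin d) : ℂ :=
  if r = 1 then if c.val = 0 then 0 else 2 * (c.val : ℂ) - 1 else 1

theorem entryCoeff_of_ne_one {r : Fin 3} (hr : r ≠ 1) (c : Fin d) : entryCoeff r c = 1 := if_neg hr

theorem entryCoeff_ne_zero {r : Fin 3} {c : Fin d} (h : r ≠ 1 ∨ 0 < c.val) :
    entryCoeff r c ≠ 0 := by
  by_cases hr : r = 1
  · have hc : 0 < c.val := h.resolve_left (not_not.2 hr)
    rw [entryCoeff, if_pos hr, if_neg hc.ne', sub_ne_zero]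
    exact_mod_cast (by omega : 2 * c.val ≠ 1)
  · rw [entryCoeff_of_ne_one hr]
    exact one_ne_zero

theorem invGaussMatrix_apply (r : Fin 3) (c : Fin d) :
    invGaussMatrix d r c = monomial (entryExp r c) (entryCoeff r c) := by
  have hexp (x : Fin (d + 1)) (n : ℕ) (h : ∀ y, entryExp r c y = if x = y then n else 0) :
      entryExp r c = Finsupp.single x n := Finsupp.ext fun y => by
    rw [h, Finsupp.single_apply]
  rw [invGaussMatrix, Matrix.of_apply]
  by_cases hc : c.val = 0
  · rw [if_pos hc]
    fin_cases r
    · rw [hexp ⟨0, by omega⟩ 2 (by simp only [entryExp_apply, Fin.ext_iff]; grind)]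
      simp [entryCoeff, X_pow_eq_monomial]
    · simp [entryCoeff, hc]
    · rw [hexp ⟨1, by omega⟩ 2 (by simp only [entryExp_apply, Fin.ext_iff]; grind)]
      simp [entryCoeff, X_pow_eq_monomial]
  · rw [if_neg hc, hexp ⟨c.val - 1 + r.val, by omega⟩ 1
      (by simp only [entryExp_apply, Fin.ext_iff]; grind)]
    have hc2 : c.val - 1 + 2 = c.val + 1 := by omega
    have hc1 : c.val - 1 + 1 = c.val := by omega
    rw [← mul_one (entryCoeff r c), ← C_mul_monomial]
    fin_cases r <;> simp [entryCoeff, hc, hc1, hc2, X]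

theorem disjoint_entryExp {r r' : Fin 3} {c c' : Fin d} (hr : r = 2 ∨ 0 < c.val)
    (h : c.val + r.val < c'.val + r'.val) : Disjoint (entryExp r c) (entryExp r' c') := by
  refine Finsupp.disjoint_iff.2 (Finset.disjoint_left.2 fun x => ?_)
  simp only [Finsupp.mem_support_iff, entryExp_apply]
  grind

theorem entryExp_eq_of_add_one {r r' : Fin 3} {c c' : Fin d} (hc : 0 < c.val)
    (hcc' : c.val + 1 = c'.val) (hrr' : r.val + 1 = r'.val) : entryExp r c' = entryExp r' c := by
  ext x
  simp only [entryExp_apply]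
  grind

theorem entryExp_of_eq_zero {c o : Fin d} (hc : c.val = 0) (ho : o.val = 1) (r : Fin 3) :
    entryExp r c = (2 - r.val) • entryExp 0 o + r.val • entryExp 1 o := by
  ext x
  simp only [entryExp_apply, Finsupp.add_apply, Finsupp.smul_apply]
  grind

/-- The exponent vector of the antidiagonal term `H 0 k * H 1 j * H 2 i` of a minor of `H`. -/
noncomputable def antidiag (i j k : Fin d) : Fin (d + 1) →₀ ℕ :=
  entryExp 0 k + entryExp 1 j + entryExp 2 i

theorem antidiag_mem_support (hij : i < j) (k : Fin d) : antidiag i j k ∈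
    (invGaussMatrix d 0 k * invGaussMatrix d 1 j * invGaussMatrix d 2 i).support := by
  have h₀ : entryCoeff 0 k ≠ 0 := entryCoeff_ne_zero (.inl (by decide))
  have h₁ : entryCoeff 1 j ≠ 0 := entryCoeff_ne_zero (.inr (by omega))
  have h₂ : entryCoeff 2 i ≠ 0 := entryCoeff_ne_zero (.inl (by decide))
  rw [invGaussMatrix_apply, invGaussMatrix_apply, invGaussMatrix_apply, monomial_mul,
    monomial_mul, ← antidiag, mem_support_iff, coeff_monomial, if_pos rfl]
  exact mul_ne_zero (mul_ne_zero h₀ h₁) h₂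

theorem antidiag_le_of_middle_lt {i' j' : Fin d} (hij : i < j) (hjj' : j < j')
    {w : Fin (d + 1) →₀ ℕ} (h : antidiag i j k ≤ w) (h' : antidiag i' j' k ≤ w) :
    antidiag i j' k ≤ w := by
  have hdisj : Disjoint (entryExp 2 i) (entryExp 1 j') :=
    disjoint_entryExp (.inl rfl) (by rw [Fin.val_two, Fin.val_one]; omega)
  rw [antidiag, add_assoc]
  refine add_add_le_of_disjoint hdisj.symm (le_self_add.trans h') (le_trans ?_ h)
  rw [antidiag, add_right_comm]
  exact le_self_add

theorem antidiag_le_of_last_lt {i' j' k' : Fin d} (hij : i < j) (hjk : j < k) (hkk' : k < k')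
    {w : Fin (d + 1) →₀ ℕ} (h : antidiag i j k ≤ w) (h' : antidiag i' j' k' ≤ w) :
    antidiag i j k' ≤ w := by
  have hdisj₁ : Disjoint (entryExp 1 j) (entryExp 0 k') :=
    disjoint_entryExp (.inr (by omega)) (by rw [Fin.val_one, Fin.val_zero]; omega)
  have hdisj₂ : Disjoint (entryExp 2 i) (entryExp 0 k') :=
    disjoint_entryExp (.inl rfl) (by rw [Fin.val_two, Fin.val_zero]; omega)
  have hdisj : Disjoint (entryExp 1 j + entryExp 2 i) (entryExp 0 k') := by
    rw [Finsupp.disjoint_iff] at hdisj₁ hdisj₂ ⊢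
    exact (Finset.disjoint_union_left.2 ⟨hdisj₁, hdisj₂⟩).mono_left Finsupp.support_add
  rw [antidiag, add_assoc] at h h' ⊢
  simpa only [zero_add] using add_add_le_of_disjoint (u := 0) hdisj.symm
    (by simpa only [zero_add] using le_self_add.trans h')
    (by simpa only [zero_add] using le_add_self.trans h)

theorem coeff_minor (i j k : Fin d) (w : Fin (d + 1) →₀ ℕ) :
    coeff w (minor (invGaussMatrix d) i j k) =
      (if entryExp 0 i + entryExp 1 j + entryExp 2 k = w then entryCoeff 1 j else 0)
      - (if entryExp 0 i + entryExp 1 k + entryExp 2 j = w then entryCoeff 1 k else 0)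
      - (if entryExp 0 j + entryExp 1 i + entryExp 2 k = w then entryCoeff 1 i else 0)
      + (if entryExp 0 j + entryExp 1 k + entryExp 2 i = w then entryCoeff 1 k else 0)
      + (if entryExp 0 k + entryExp 1 i + entryExp 2 j = w then entryCoeff 1 i else 0)
      - (if antidiag i j k = w then entryCoeff 1 j else 0) := by
  simp only [minor_eq, invGaussMatrix_apply, monomial_mul, coeff_add, coeff_sub, coeff_monomial,
    entryCoeff_of_ne_one (show (0 : Fin 3) ≠ 1 by decide),
    entryCoeff_of_ne_one (show (2 : Fin 3) ≠ 1 by decide), one_mul, mul_one, antidiag]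
  rfl

/-- The monomial orders for which the leading monomial of every `3 × 3` minor of
`invGaussMatrix d` is its antidiagonal monomial. -/
def IsAntidiagonal (m : MonomialOrder (Fin (d + 1))) : Prop :=
  ∀ i j k : Fin d, i < j → j < k → m.degree (minor (invGaussMatrix d) i j k) = antidiag i j k

theorem strictMono_triple (hij : i < j) (hjk : j < k) : StrictMono ![i, j, k] :=
  Fin.strictMono_iff_lt_succ.2 (Fin.forall_fin_two.2 ⟨hij, hjk⟩)

/-- The generators of `invGaussIdeal d`. -/
def invGaussMinors (d : ℕ) : Set (MvPolynomial (Fin (d + 1)) ℂ) :=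
  {p | ∃ s : Fin 3 → Fin d, StrictMono s ∧ p = ((invGaussMatrix d).submatrix id s).det}

theorem mem_invGaussMinors {p : MvPolynomial (Fin (d + 1)) ℂ} : p ∈ invGaussMinors d ↔
    ∃ i j k : Fin d, i < j ∧ j < k ∧ p = minor (invGaussMatrix d) i j k := by
  constructor
  · rintro ⟨s, hs, rfl⟩
    refine ⟨s 0, s 1, s 2, hs (by decide), hs (by decide), ?_⟩
    rw [minor, ← FinVec.etaExpand_eq s]
    rfl
  · rintro ⟨i, j, k, hij, hjk, rfl⟩
    exact ⟨![i, j, k], strictMono_triple hij hjk, rfl⟩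

theorem leadLine_eq_of_mul_sub_mul_mem {m : MonomialOrder (Fin (d + 1))}
    {B : Set (MvPolynomial (Fin (d + 1)) ℂ)} {r : Fin 3} (hi : r = 2 ∨ 0 < i.val) (hij : i < j)
    {u w : Fin (d + 1) →₀ ℕ} {g h : MvPolynomial (Fin (d + 1)) ℂ}
    (hg : m.degree g = u + entryExp r i) (hh : m.degree h = u + entryExp r j)
    (hgh : invGaussMatrix d r j * g - invGaussMatrix d r i * h ∈
      multiplesSpan m B (Set.Iio (m.toSyn (u + (entryExp r j + entryExp r i)))))
    (hgw : m.degree g ≤ w) (hhw : m.degree h ≤ w) : leadLine m B w g = leadLine m B w h := by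
  rw [invGaussMatrix_apply, invGaussMatrix_apply] at hgh
  have hdisj : Disjoint (entryExp r j) (entryExp r i) :=
    (disjoint_entryExp hi (Nat.add_lt_add_right hij _)).symm
  have hci : entryCoeff r i ≠ 0 := entryCoeff_ne_zero (hi.imp_left (by rintro rfl; decide))
  have hcj : entryCoeff r j ≠ 0 := entryCoeff_ne_zero (.inr (by omega))
  exact leadLine_eq_of_disjoint hdisj hcj hci hg hh hgh hgw hhw

open scoped MonomialOrder

section Order

variable {m : MonomialOrder (Fin (d + 1))} (hm : IsAntidiagonal m)
include hm

theorem IsAntidiagonal.lt_antidiag (hij : i < j) (hjk : j < k) {w : Fin (d + 1) →₀ ℕ}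
    (hw : coeff w (minor (invGaussMatrix d) i j k) ≠ 0) (hne : w ≠ antidiag i j k) :
    w ≺[m] antidiag i j k := by
  refine lt_of_le_of_ne ?_ (m.toSyn.injective.ne hne)
  exact hm i j k hij hjk ▸ m.le_degree (mem_support_iff.2 hw)

theorem IsAntidiagonal.entryExp_zero_add_one_lt_of_pos (hj : 0 < j.val) (hjk : j < k) :
    entryExp 0 j + entryExp 1 k ≺[m] entryExp 0 k + entryExp 1 j := by
  -- In the minor on the columns `0, j, k` the zero entry of `H` leaves this term uncancelled.
  let o : Fin d := ⟨0, by omega⟩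
  suffices entryExp 0 j + entryExp 1 k + entryExp 2 o ≺[m] antidiag o j k by
    simpa only [antidiag, map_add, add_lt_add_iff_right] using this
  have hne : entryExp 0 j + entryExp 1 k + entryExp 2 o ≠ antidiag o j k :=
    DFunLike.ne_iff.2 ⟨k.castSucc, by
      simp only [antidiag, Finsupp.add_apply, entryExp_apply, o, Fin.val_castSucc]; grind⟩
  refine hm.lt_antidiag (Fin.lt_def.2 hj) hjk ?_ hne
  have h₁ : entryExp 0 o + entryExp 1 j + entryExp 2 k ≠
      entryExp 0 j + entryExp 1 k + entryExp 2 o :=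
    DFunLike.ne_iff.2 ⟨0, by simp only [Finsupp.add_apply, entryExp_apply, o]; grind⟩
  have h₂ : entryExp 0 o + entryExp 1 k + entryExp 2 j ≠
      entryExp 0 j + entryExp 1 k + entryExp 2 o :=
    DFunLike.ne_iff.2 ⟨0, by simp only [Finsupp.add_apply, entryExp_apply, o]; grind⟩
  have ho : entryCoeff 1 o = 0 := by simp only [entryCoeff, o, if_true]
  simpa [coeff_minor, h₁, h₂, hne.symm, ho] using entryCoeff_ne_zero (.inr (hj.trans hjk))

theorem IsAntidiagonal.entryExp_zero_add_one_lt (hjk : j < k) (hk : 1 < k.val) :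
    entryExp 0 j + entryExp 1 k ≺[m] entryExp 0 k + entryExp 1 j := by
  rcases Nat.eq_zero_or_pos j.val with hj | hj
  · let o : Fin d := ⟨1, by omega⟩
    have hlt := hm.entryExp_zero_add_one_lt_of_pos (j := o) Nat.one_pos hk
    simp only [entryExp_of_eq_zero (o := o) hj rfl, map_add, map_nsmul, Fin.val_zero,
      Fin.val_one] at hlt ⊢
    grind
  · exact hm.entryExp_zero_add_one_lt_of_pos hj hjk

theorem IsAntidiagonal.entryExp_one_add_two_lt (hij : i < j) (hj : j.val + 1 < d) :
    entryExp 1 i + entryExp 2 j ≺[m] entryExp 1 j + entryExp 2 i := by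
  -- Up to scalars `H` is a Hankel matrix off its first column, so this is the inequality between
  -- rows `0` and `1` shifted by one column.
  let j' : Fin d := ⟨j.val + 1, hj⟩
  have hj1 : entryExp 0 j' = entryExp 1 j := entryExp_eq_of_add_one (by omega) rfl rfl
  have hj2 : entryExp 1 j' = entryExp 2 j := entryExp_eq_of_add_one (by omega) rfl rfl
  let i' : Fin d := ⟨i.val + 1, by omega⟩
  have hlt : entryExp 0 i' + entryExp 2 j ≺[m] entryExp 1 j + entryExp 1 i' := by
    have := hm.entryExp_zero_add_one_lt_of_pos (j := i') (k := j') (Nat.succ_pos _)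
      (Nat.add_lt_add_right hij 1)
    rwa [hj1, hj2] at this
  rcases Nat.eq_zero_or_pos i.val with hi | hi
  · have hi' : i'.val = 1 := congrArg (· + 1) hi
    simp only [entryExp_of_eq_zero hi hi', map_add, map_nsmul, Fin.val_one, Fin.val_two] at hlt ⊢
    grind
  · have hi1 : entryExp 0 i' = entryExp 1 i := entryExp_eq_of_add_one hi rfl rfl
    have hi2 : entryExp 1 i' = entryExp 2 i := entryExp_eq_of_add_one hi rfl rfl
    rwa [hi1, hi2] at hlt

theorem IsAntidiagonal.diag_lt_antidiag (hij : i < j) (hjk : j < k) :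
    entryExp 0 i + entryExp 1 k + entryExp 2 j ≺[m] antidiag i j k := by
  have h01 := hm.entryExp_zero_add_one_lt (hij.trans hjk) (by omega)
  have h12 := hm.entryExp_one_add_two_lt hij (by omega)
  simp only [antidiag, map_add] at h01 h12 ⊢
  grind

theorem IsAntidiagonal.cyclic_lt_antidiag (hi : 0 < i.val) (hij : i < j) (hjk : j < k) :
    entryExp 0 j + entryExp 1 i + entryExp 2 k ≺[m] antidiag i j k := by
  have hne (a b c : Fin d) (ha : a ≤ k) (hb : b ≤ k) (hc : c < k) :
      entryExp 0 a + entryExp 1 b + entryExp 2 c ≠ entryExp 0 j + entryExp 1 i + entryExp 2 k :=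
    DFunLike.ne_iff.2 ⟨k.succ, by
      simp only [Finsupp.add_apply, entryExp_apply, Fin.val_succ, Fin.val_zero, Fin.val_one,
        Fin.val_two]
      grind (splits := 12)⟩
  have h₁ : entryExp 0 i + entryExp 1 j + entryExp 2 k ≠
      entryExp 0 j + entryExp 1 i + entryExp 2 k :=
    DFunLike.ne_iff.2 ⟨j.castSucc, by
      simp only [Finsupp.add_apply, entryExp_apply, Fin.val_castSucc]; grind⟩
  have hanti := hne k j i le_rfl hjk.le (hij.trans hjk)
  refine hm.lt_antidiag hij hjk ?_ hanti.symm
  rw [← antidiag] at hanti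
  simpa [coeff_minor, h₁, hanti, hne i k j (hij.trans hjk).le le_rfl hjk,
    hne j k i hjk.le le_rfl (hij.trans hjk), hne k i j le_rfl (hij.trans hjk).le hjk]
    using entryCoeff_ne_zero (.inr hi)

theorem IsAntidiagonal.mul_minor_mem (hij : i < j) (hjk : j < k) {r : Fin 3} {c : Fin d}
    {w : Fin (d + 1) →₀ ℕ} (hw : entryExp r c + antidiag i j k ≺[m] w) :
    invGaussMatrix d r c * minor (invGaussMatrix d) i j k ∈
      multiplesSpan m (invGaussMinors d) (Set.Iio (m.toSyn w)) := by
  rw [invGaussMatrix_apply]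
  exact monomial_mul_mem_multiplesSpan (mem_invGaussMinors.2 ⟨i, j, k, hij, hjk, rfl⟩)
    (by rwa [hm i j k hij hjk]) _

theorem IsAntidiagonal.leadLine_eq_of_lt_last (hij : i < j) (hjk : j < k) (hkl : k < l)
    {w : Fin (d + 1) →₀ ℕ} (hk : antidiag i j k ≤ w) (hl : antidiag i j l ≤ w) :
    leadLine m (invGaussMinors d) w (minor (invGaussMatrix d) i j k) =
      leadLine m (invGaussMinors d) w (minor (invGaussMatrix d) i j l) := by
  have hdk := hm i j k hij hjk
  have hdl := hm i j l hij (hjk.trans hkl)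
  refine leadLine_eq_of_mul_sub_mul_mem (r := 0) (u := entryExp 1 j + entryExp 2 i)
    (.inr (by omega)) hkl (by rw [hdk, antidiag]; abel) (by rw [hdl, antidiag]; abel) ?_
    (hdk.symm ▸ hk) (hdl.symm ▸ hl)
  have hrow : invGaussMatrix d 0 l * minor (invGaussMatrix d) i j k
        - invGaussMatrix d 0 k * minor (invGaussMatrix d) i j l =
      invGaussMatrix d 0 i * minor (invGaussMatrix d) j k l
        - invGaussMatrix d 0 j * minor (invGaussMatrix d) i k l := by
    linear_combination -mul_minor_alternating_sum (invGaussMatrix d) 0 i j k l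
  rw [hrow]
  have hi := hm.diag_lt_antidiag hij hjk
  have hj := hm.entryExp_zero_add_one_lt hjk (by omega)
  refine sub_mem (hm.mul_minor_mem hjk hkl ?_) (hm.mul_minor_mem (hij.trans hjk) hkl ?_)
  · simp only [antidiag, map_add] at hi ⊢
    grind
  · simp only [antidiag, map_add] at hj ⊢
    grind

theorem IsAntidiagonal.leadLine_eq_of_lt_middle (hij : i < j) (hjk : j < k) (hkl : k < l)
    {w : Fin (d + 1) →₀ ℕ} (hj : antidiag i j l ≤ w) (hk : antidiag i k l ≤ w) :
    leadLine m (invGaussMinors d) w (minor (invGaussMatrix d) i j l) =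
      leadLine m (invGaussMinors d) w (minor (invGaussMatrix d) i k l) := by
  have hdj := hm i j l hij (hjk.trans hkl)
  have hdk := hm i k l (hij.trans hjk) hkl
  refine leadLine_eq_of_mul_sub_mul_mem (r := 1) (u := entryExp 0 l + entryExp 2 i)
    (.inr (by omega)) hjk (by rw [hdj, antidiag]; abel) (by rw [hdk, antidiag]; abel) ?_
    (hdj.symm ▸ hj) (hdk.symm ▸ hk)
  have hrow : invGaussMatrix d 1 k * minor (invGaussMatrix d) i j l
        - invGaussMatrix d 1 j * minor (invGaussMatrix d) i k l =
      invGaussMatrix d 1 l * minor (invGaussMatrix d) i j k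
        - invGaussMatrix d 1 i * minor (invGaussMatrix d) j k l := by
    linear_combination mul_minor_alternating_sum (invGaussMatrix d) 1 i j k l
  rw [hrow]
  have hl := hm.entryExp_zero_add_one_lt hkl (by omega)
  have hi := hm.entryExp_one_add_two_lt hij (by omega)
  refine sub_mem (hm.mul_minor_mem hij hjk ?_) (hm.mul_minor_mem hjk hkl ?_)
  · simp only [antidiag, map_add] at hl ⊢
    grind
  · simp only [antidiag, map_add] at hi ⊢
    grind

theorem IsAntidiagonal.leadLine_eq_of_lt_first (hij : i < j) (hjk : j < k) (hkl : k < l)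
    {w : Fin (d + 1) →₀ ℕ} (hi : antidiag i k l ≤ w) (hj : antidiag j k l ≤ w) :
    leadLine m (invGaussMinors d) w (minor (invGaussMatrix d) i k l) =
      leadLine m (invGaussMinors d) w (minor (invGaussMatrix d) j k l) := by
  have hdi := hm i k l (hij.trans hjk) hkl
  have hdj := hm j k l hjk hkl
  refine leadLine_eq_of_mul_sub_mul_mem (r := 2) (u := entryExp 0 l + entryExp 1 k)
    (.inl rfl) hij hdi hdj ?_ (hdi.symm ▸ hi) (hdj.symm ▸ hj)
  have hrow : invGaussMatrix d 2 j * minor (invGaussMatrix d) i k l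
        - invGaussMatrix d 2 i * minor (invGaussMatrix d) j k l =
      invGaussMatrix d 2 k * minor (invGaussMatrix d) i j l
        - invGaussMatrix d 2 l * minor (invGaussMatrix d) i j k := by
    linear_combination -mul_minor_alternating_sum (invGaussMatrix d) 2 i j k l
  rw [hrow]
  have hk := hm.entryExp_one_add_two_lt hjk (by omega)
  have hl := hm.cyclic_lt_antidiag (by omega) hjk hkl
  refine sub_mem (hm.mul_minor_mem hij (hjk.trans hkl) ?_) (hm.mul_minor_mem hij hjk ?_)
  · simp only [antidiag, map_add] at hk ⊢
    grind
  · simp only [antidiag, map_add] at hl ⊢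
    grind

theorem IsAntidiagonal.leadLine_eq_of_last_two_eq {i' : Fin d} (hij : i < j) (hij' : i' < j)
    (hjk : j < k) {w : Fin (d + 1) →₀ ℕ} (h : antidiag i j k ≤ w) (h' : antidiag i' j k ≤ w) :
    leadLine m (invGaussMinors d) w (minor (invGaussMatrix d) i j k) =
      leadLine m (invGaussMinors d) w (minor (invGaussMatrix d) i' j k) := by
  rcases lt_trichotomy i i' with hii' | rfl | hii'
  · exact hm.leadLine_eq_of_lt_first hii' hij' hjk h h'
  · rfl
  · exact (hm.leadLine_eq_of_lt_first hii' hij hjk h' h).symm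

theorem IsAntidiagonal.leadLine_eq_of_last_eq {i' j' : Fin d} (hij : i < j) (hij' : i' < j')
    (hjk : j < k) (hjk' : j' < k) {w : Fin (d + 1) →₀ ℕ} (h : antidiag i j k ≤ w)
    (h' : antidiag i' j' k ≤ w) :
    leadLine m (invGaussMinors d) w (minor (invGaussMatrix d) i j k) =
      leadLine m (invGaussMinors d) w (minor (invGaussMatrix d) i' j' k) := by
  wlog hjj' : j ≤ j' generalizing i j i' j'
  · exact (this hij' hij hjk' hjk h' h (le_of_not_ge hjj')).symm
  rcases hjj'.lt_or_eq with hlt | rfl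
  · have hmid : antidiag i j' k ≤ w := antidiag_le_of_middle_lt hij hlt h h'
    exact (hm.leadLine_eq_of_lt_middle hij hlt hjk' h hmid).trans
      (hm.leadLine_eq_of_last_two_eq (hij.trans hlt) hij' hjk' hmid h')
  · exact hm.leadLine_eq_of_last_two_eq hij hij' hjk h h'

theorem IsAntidiagonal.leadLine_eq {i' j' k' : Fin d} (hij : i < j) (hij' : i' < j')
    (hjk : j < k) (hjk' : j' < k') {w : Fin (d + 1) →₀ ℕ} (h : antidiag i j k ≤ w)
    (h' : antidiag i' j' k' ≤ w) :
    leadLine m (invGaussMinors d) w (minor (invGaussMatrix d) i j k) =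
      leadLine m (invGaussMinors d) w (minor (invGaussMatrix d) i' j' k') := by
  wlog hkk' : k ≤ k' generalizing i j k i' j' k'
  · exact (this hij' hij hjk' hjk h' h (le_of_not_ge hkk')).symm
  rcases hkk'.lt_or_eq with hlt | rfl
  · have hmid : antidiag i j k' ≤ w := antidiag_le_of_last_lt hij hjk hlt h h'
    exact (hm.leadLine_eq_of_lt_last hij hjk hlt h hmid).trans
      (hm.leadLine_eq_of_last_eq hij hij' (hjk.trans hlt) hjk' hmid h')
  · exact hm.leadLine_eq_of_last_eq hij hij' hjk hjk' h h'

theorem IsAntidiagonal.exists_antidiag_le_degree {f : MvPolynomial (Fin (d + 1)) ℂ}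
    (hf : f ∈ invGaussIdeal d) (hf0 : f ≠ 0) :
    ∃ i j k : Fin d, i < j ∧ j < k ∧ antidiag i j k ≤ m.degree f := by
  obtain ⟨_, hg, hgf⟩ := exists_degree_le_degree_of_leadLine_eq (m := m) (B := invGaussMinors d)
    (fun w g hg g' hg' hgw hgw' => by
      obtain ⟨i, j, k, hij, hjk, rfl⟩ := mem_invGaussMinors.1 hg
      obtain ⟨i', j', k', hij', hjk', rfl⟩ := mem_invGaussMinors.1 hg'
      rw [hm _ _ _ hij hjk] at hgw
      rw [hm _ _ _ hij' hjk'] at hgw'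
      exact hm.leadLine_eq hij' hij hjk' hjk hgw' hgw) hf hf0
  obtain ⟨i, j, k, hij, hjk, rfl⟩ := mem_invGaussMinors.1 hg
  exact ⟨i, j, k, hij, hjk, hm i j k hij hjk ▸ hgf⟩

end Order

theorem isAntidiagonal_monomialOrderOfRel
    {le : (Fin (d + 1) →₀ ℕ) → (Fin (d + 1) →₀ ℕ) → Prop} (hlin : IsLinearOrder _ le)
    (hadd : ∀ a b c, le a b → le (a + c) (b + c)) (hzero : ∀ a, le 0 a)
    (hlead : ∀ i j k : Fin d, i < j → j < k →
      antidiag i j k ∈ (minor (invGaussMatrix d) i j k).support ∧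
        ∀ b ∈ (minor (invGaussMatrix d) i j k).support, le b (antidiag i j k)) :
    IsAntidiagonal (monomialOrderOfRel le hlin hadd hzero) := by
  intro i j k hij hjk
  obtain ⟨hmem, hmax⟩ := hlead i j k hij hjk
  refine (monomialOrderOfRel le hlin hadd hzero).toSyn.injective (le_antisymm ?_ ?_)
  · exact MonomialOrder.degree_le_iff.2 fun b hb => monomialOrderOfRel_le_iff.2 (hmax b hb)
  · exact (monomialOrderOfRel le hlin hadd hzero).le_degree hmem

end InvGauss

/-- The `3 × 3` minors of `H` form a Gröbner basis of `I₃(H)` with respect to any monomial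
order for which the leading monomial of each minor is its antidiagonal monomial (the unique
monomial of the product of the `(1,k)`, `(2,j)`, `(3,i)` entries of `H` for columns
`i < j < k`): for every nonzero `f ∈ I₃(H)`, the leading monomial of `f` (the `≼`-largest
element of its support) is divisible by the antidiagonal monomial of some minor. -/
theorem invGauss_groebnerBasis (d : ℕ) (hd : 3 ≤ d)
    (le : (Fin (d + 1) →₀ ℕ) → (Fin (d + 1) →₀ ℕ) → Prop)
    (hlin : IsLinearOrder _ le)
    (hadd : ∀ a b c : Fin (d + 1) →₀ ℕ, le a b → le (a + c) (b + c))
    (hzero : ∀ a : Fin (d + 1) →₀ ℕ, le 0 a)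
    (hlead : ∀ s : Fin 3 → Fin d, StrictMono s →
      ∀ a ∈ (invGaussMatrix d 0 (s 2) * invGaussMatrix d 1 (s 1)
          * invGaussMatrix d 2 (s 0)).support,
        a ∈ (((invGaussMatrix d).submatrix id s).det).support ∧
          ∀ b ∈ (((invGaussMatrix d).submatrix id s).det).support, le b a)
    (f : MvPolynomial (Fin (d + 1)) ℂ) (hf : f ∈ invGaussIdeal d) (hf0 : f ≠ 0) :
    ∃ lmf ∈ f.support, (∀ b ∈ f.support, le b lmf) ∧
      ∃ s : Fin 3 → Fin d, StrictMono s ∧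
        ∃ a ∈ (invGaussMatrix d 0 (s 2) * invGaussMatrix d 1 (s 1)
            * invGaussMatrix d 2 (s 0)).support,
          ∀ i : Fin (d + 1), a i ≤ lmf i := by
  let m := monomialOrderOfRel le hlin hadd hzero
  have hm : InvGauss.IsAntidiagonal m := by
    refine InvGauss.isAntidiagonal_monomialOrderOfRel hlin hadd hzero fun i j k hij hjk => ?_
    refine hlead ![i, j, k] (InvGauss.strictMono_triple hij hjk) _ ?_
    exact InvGauss.antidiag_mem_support hij k
  obtain ⟨i, j, k, hij, hjk, hle⟩ := hm.exists_antidiag_le_degree hf hf0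
  refine ⟨m.degree f, m.degree_mem_support hf0,
    fun b hb => monomialOrderOfRel_le_iff.1 (m.le_degree hb),
    ![i, j, k], InvGauss.strictMono_triple hij hjk, InvGauss.antidiag i j k, ?_, hle⟩
  exact InvGauss.antidiag_mem_support hij k
end

section
/- Let d ≥ 3, let I = I_3(H) ⊆ ℂ[m_0,…,m_d], and let x ∈ ℂ^{d+1} be a nonzero point at which every 3×3 minor of H vanishes. Let J(x) be the Jacobian matrix whose rows are indexed by the 3-element subsets {i < j < k} of the column set {1,…,d}, whose columns are indexed by l = 0,…,d, and whose ({i,j,k}, l) entry is the partial derivative with respect to m_l of the 3×3 minor of H on columns i,j,k, evaluated at x. Then the rank of J(x) over ℂ is strictly less than d−2 if and only if either x_0 = x_1 = ⋯ = x_{d−2} = 0 or x_1 = x_2 = ⋯ = x_d = 0. (Equivalently: the singular locus of the projective inverse Gaussian moment variety M_d^IG ⊆ ℙ^d is the line m_0 = m_1 = ⋯ = m_{d−2} = 0 together with the point m_1 = m_2 = ⋯ = m_d = 0.) -/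
open MvPolynomial

/-!
At a point `x` where `H(x)` has rank `2`, let `w` span its left kernel. Differentiating the minors
of `H` shows that for every `u` in the right kernel of `H(x)` the covector `(wᵀ (∂H/∂m_l)(x) u)_l`
lies in the row span of the Jacobian. That kernel has dimension at least `d - 2`, so the rank is at
least `d - 2` as soon as `u` can be recovered from its covector. Since the columns of `H` after the
first are shifts of one another up to the coefficients `2c - 3`, `wᵀ H(x) = 0` is a three-term
recurrence for `x`, and the vanishing of the covector is a three-term recurrence, run backwards, for
`u`; together they force `u = 0` unless `x` lies on the line. Off the line, `H(x)` has rank less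
than `2` only at the point. Conversely, two rows of `H` vanish at the point, which kills the
gradients of all minors, and on the line only the partial derivatives by `m_0, …, m_{d-4}` can be
nonzero.
-/

open scoped Matrix

theorem exists_seq_eq_comp_val {K : Type*} [Zero K] {m : ℕ} (x : Fin m → K) :
    ∃ X : ℕ → K, x = X ∘ Fin.val ∧ ∀ i, m ≤ i → X i = 0 := by
  refine ⟨Function.extend Fin.val x 0, (Function.extend_comp Fin.val_injective x 0).symm, ?_⟩
  intro i hi
  refine Function.extend_apply' _ _ _ ?_
  rintro ⟨j, rfl⟩
  exact j.is_lt.not_ge hi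

theorem sum_fin_ite_eq {M : Type*} [AddCommMonoid M] {n : ℕ} (j : ℕ) {f : ℕ → M}
    (hf : n ≤ j → f j = 0) :
    ∑ c : Fin n, (if (c : ℕ) = j then f c else 0) = f j := by
  rw [Fin.sum_univ_eq_sum_range fun c ↦ if c = j then f c else 0, Finset.sum_ite_eq']
  simpa only [Finset.mem_range, ite_eq_left_iff, not_lt, eq_comm (a := (0 : M))] using hf

theorem two_mul_natCast_add_one_ne_zero {R : Type*} [Semiring R] [CharZero R] (k : ℕ) :
    2 * (k : R) + 1 ≠ 0 :=
  mod_cast Nat.succ_ne_zero (2 * k)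

theorem mulVec_comp_val {R ι : Type*} [NonUnitalNonAssocSemiring R] {n : ℕ}
    (A : Matrix ι (Fin (n + 1)) R) (U : ℕ → R) (r : ι) :
    (A *ᵥ (U ∘ Fin.val)) r = A r 0 * U 0 + ∑ c : Fin n, A r c.succ * U (c + 1) := by
  simp [Matrix.mulVec, dotProduct, Fin.sum_univ_succ]

section MaximalMinors

theorem rank_lt_card_of_vecMul_eq_zero {m n K : Type*} [Fintype m] [Fintype n] [Field K]
    {A : Matrix m n K} {w : m → K} (hw : w ≠ 0) (hwA : w ᵥ* A = 0) :
    A.rank < Fintype.card m := by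
  have hrange : LinearMap.range A.mulVecLin ≠ ⊤ := fun htop ↦ hw <| dotProduct_eq_zero w fun v ↦ by
    obtain ⟨u, rfl⟩ := LinearMap.range_eq_top.mp htop v
    rw [Matrix.mulVecLin_apply, Matrix.dotProduct_mulVec, hwA, zero_dotProduct]
  simpa [Matrix.rank] using Submodule.finrank_lt hrange

theorem det_submatrix_eq_zero_or_exists_strictMono {R ι : Type*} [CommRing R] [LinearOrder ι]
    {m : ℕ} (M : Matrix (Fin m) ι R) (s : Fin m → ι) :
    (M.submatrix id s).det = 0 ∨ ∃ t : Fin m → ι, StrictMono t ∧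
      ∃ ε : ℤˣ, (M.submatrix id s).det = ε • (M.submatrix id t).det := by
  by_cases hs : Function.Injective s
  · let τ := Tuple.sort s
    refine .inr ⟨s ∘ τ, (Tuple.monotone_sort s).strictMono_of_injective (hs.comp τ.injective),
      Equiv.Perm.sign τ, ?_⟩
    have hperm := Matrix.det_permute' τ (M.submatrix id s)
    rw [Matrix.submatrix_submatrix, Function.comp_id] at hperm
    rw [hperm, Units.smul_def, zsmul_eq_mul, ← mul_assoc, ← Int.cast_mul, ← Units.val_mul,
      Int.units_mul_self, Units.val_one, Int.cast_one, one_mul]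
  · obtain ⟨i, j, hij, hne⟩ := Function.not_injective_iff.mp hs
    exact .inl (Matrix.det_zero_of_column_eq hne fun k ↦ by simp [hij])

/-- The signed maximal minors of the columns `s` of a matrix with one row too many, i.e. the
cofactors along a column adjoined on the left; for `r = 2` this is the cross product. -/
def columnCofactors {R ι : Type*} [CommRing R] {r : ℕ} (M : Matrix (Fin (r + 1)) ι R)
    (s : Fin r → ι) : Fin (r + 1) → R :=
  fun i ↦ (-1) ^ (i : ℕ) * (M.submatrix i.succAbove s).det

theorem det_submatrix_cons {R ι : Type*} [CommRing R] {r : ℕ} (M : Matrix (Fin (r + 1)) ι R)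
    (k : ι) (s : Fin r → ι) :
    (M.submatrix id (Fin.cons k s : Fin (r + 1) → ι)).det = columnCofactors M s ⬝ᵥ M.col k := by
  rw [Matrix.det_succ_column_zero, dotProduct]
  refine Finset.sum_congr rfl fun i _ ↦ ?_
  rw [columnCofactors, Matrix.submatrix_submatrix]
  exact mul_right_comm _ _ _

theorem columnCofactors_map {R S ι : Type*} [CommRing R] [CommRing S] {r : ℕ} (f : R →+* S)
    (M : Matrix (Fin (r + 1)) ι R) (s : Fin r → ι) :
    columnCofactors (M.map f) s = f ∘ columnCofactors M s := by
  ext i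
  simp [columnCofactors, RingHom.map_det, Matrix.submatrix_map]

theorem columnCofactors_apply_eq_zero_of_row {R ι : Type*} [CommRing R] {r : ℕ}
    {M : Matrix (Fin (r + 1)) ι R} {i j : Fin (r + 1)} (hi : ∀ k, M i k = 0) (hj : j ≠ i)
    (s : Fin r → ι) : columnCofactors M s j = 0 := by
  obtain ⟨k, rfl⟩ := Fin.exists_succAbove_eq hj.symm
  rw [columnCofactors, Matrix.det_eq_zero_of_row_eq_zero k fun _ ↦ hi _, mul_zero]

theorem mul_eq_mul_of_columnCofactors_eq_zero {R ι : Type*} [CommRing R]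
    {M : Matrix (Fin 3) ι R} {p q : ι} (h : columnCofactors M ![p, q] = 0) :
    M 0 p * M 1 q = M 0 q * M 1 p ∧ M 0 p * M 2 q = M 0 q * M 2 p := by
  constructor
  · simpa [columnCofactors, Matrix.det_fin_two, Fin.succAbove, sub_eq_zero] using congrFun h 2
  · have h₁ : M 0 q * M 2 p = M 0 p * M 2 q := by
      simpa [columnCofactors, Matrix.det_fin_two, Fin.succAbove, sub_eq_zero] using congrFun h 1
    exact h₁.symm

variable {σ R ι : Type*} [CommRing R] {m r n : ℕ}

theorem eval_pderiv_X [DecidableEq σ] (x : σ → R) (l i : σ) :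
    eval x (pderiv l (MvPolynomial.X i)) = if i = l then 1 else 0 := by
  rw [pderiv_X, Pi.single_apply, apply_ite (eval x), map_one, map_zero]

theorem eval_pderiv_mul_eq_zero {x : σ → R} {f g : MvPolynomial σ R}
    (hf : eval x f = 0) (hg : eval x g = 0) (l : σ) : eval x (pderiv l (f * g)) = 0 := by
  rw [pderiv_mul, map_add, map_mul, map_mul, hf, hg, mul_zero, zero_mul, add_zero]

theorem eval_pderiv_det_eq_zero_of_rows {x : σ → R}
    {M : Matrix (Fin m) (Fin m) (MvPolynomial σ R)} {i j : Fin m} (hij : i ≠ j)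
    (hi : ∀ k, eval x (M i k) = 0) (hj : ∀ k, eval x (M j k) = 0) (l : σ) :
    eval x (pderiv l M.det) = 0 := by
  simp only [Matrix.det_apply, map_sum, map_zsmul, Units.smul_def]
  refine Finset.sum_eq_zero fun τ _ ↦ ?_
  rw [← Equiv.prod_comp τ.symm, ← Finset.mul_prod_erase _ _ (Finset.mem_univ i)]
  simp only [Equiv.apply_symm_apply]
  rw [eval_pderiv_mul_eq_zero (hi _), smul_zero]
  rw [map_prod]
  exact Finset.prod_eq_zero (Finset.mem_erase.mpr ⟨hij.symm, Finset.mem_univ j⟩) (hj _)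

/-- The entrywise partial derivative `∂M/∂X_l` of a matrix of polynomials, evaluated at `x`. -/
noncomputable def pderivMatrix (M : Matrix (Fin m) ι (MvPolynomial σ R)) (x : σ → R) (l : σ) :
    Matrix (Fin m) ι R :=
  M.map fun f ↦ eval x (pderiv l f)

/-- The Jacobian matrix at `x` of the maximal minors of `M`, where a minor is indexed by the
increasing enumeration of its columns. -/
noncomputable def minorJacobian (M : Matrix (Fin m) (Fin n) (MvPolynomial σ R)) (x : σ → R) :
    Matrix {s : Fin m → Fin n // StrictMono s} σ R :=
  Matrix.of fun s l ↦ eval x (pderiv l (M.submatrix id s.val).det)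

theorem eval_pderiv_det_submatrix_cons (M : Matrix (Fin (r + 1)) ι (MvPolynomial σ R))
    (x : σ → R) (l : σ) (k : ι) (s : Fin r → ι) :
    eval x (pderiv l (M.submatrix id (Fin.cons k s : Fin (r + 1) → ι)).det) =
      columnCofactors (M.map (eval x)) s ⬝ᵥ (pderivMatrix M x l).col k +
        (fun i ↦ eval x (pderiv l (columnCofactors M s i))) ⬝ᵥ (M.map (eval x)).col k := by
  simp only [det_submatrix_cons, columnCofactors_map, dotProduct, map_sum, pderiv_mul, map_add,
    map_mul, Finset.sum_add_distrib, pderivMatrix, Matrix.col_apply, Matrix.map_apply,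
    Function.comp_apply]
  exact add_comm _ _

theorem sum_mul_eval_pderiv_det_submatrix_cons [Fintype ι]
    {M : Matrix (Fin (r + 1)) ι (MvPolynomial σ R)} {x : σ → R} {u : ι → R}
    (hu : M.map (eval x) *ᵥ u = 0) (l : σ) (s : Fin r → ι) :
    ∑ k, u k * eval x (pderiv l (M.submatrix id (Fin.cons k s : Fin (r + 1) → ι)).det) =
      columnCofactors (M.map (eval x)) s ⬝ᵥ pderivMatrix M x l *ᵥ u := by
  have sum_col (v : Fin (r + 1) → R) (A : Matrix (Fin (r + 1)) ι R) :
      ∑ k, u k * (v ⬝ᵥ A.col k) = v ⬝ᵥ A *ᵥ u := by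
    rw [Matrix.dotProduct_mulVec, dotProduct_comm]
    rfl
  simp only [eval_pderiv_det_submatrix_cons, mul_add, Finset.sum_add_distrib, sum_col, hu,
    dotProduct_zero, add_zero]

theorem gradient_det_submatrix_mem_span (M : Matrix (Fin m) (Fin n) (MvPolynomial σ R))
    (x : σ → R) (s : Fin m → Fin n) :
    (fun l ↦ eval x (pderiv l (M.submatrix id s).det)) ∈
      Submodule.span R (Set.range (minorJacobian M x).row) := by
  obtain hs | ⟨t, ht, ε, hs⟩ := det_submatrix_eq_zero_or_exists_strictMono M s
  · simp only [hs, map_zero]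
    exact zero_mem _
  · have hrow : (fun l ↦ eval x (pderiv l (M.submatrix id s).det)) =
        (ε : ℤ) • (minorJacobian M x).row ⟨t, ht⟩ := by
      ext l
      simp [hs, minorJacobian, Units.smul_def]
    rw [hrow]
    exact zsmul_mem (Submodule.subset_span (Set.mem_range_self _)) _

theorem columnCofactors_vecMul_eq_zero {M : Matrix (Fin (r + 1)) (Fin n) (MvPolynomial σ R)}
    {x : σ → R} (hM : ∀ s : Fin (r + 1) → Fin n, StrictMono s →
      eval x (M.submatrix id s).det = 0)
    (s : Fin r → Fin n) : columnCofactors (M.map (eval x)) s ᵥ* M.map (eval x) = 0 := by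
  ext k
  change columnCofactors (M.map (eval x)) s ⬝ᵥ (M.map (eval x)).col k = 0
  rw [← det_submatrix_cons]
  obtain h | ⟨t, ht, ε, h⟩ :=
    det_submatrix_eq_zero_or_exists_strictMono (M.map (eval x)) (Fin.cons k s)
  · exact h
  · rw [h, Matrix.submatrix_map, ← RingHom.mapMatrix_apply, ← RingHom.map_det, hM t ht, smul_zero]

theorem sub_le_rank_minorJacobian {K : Type*} [Field K] [Fintype σ]
    {M : Matrix (Fin (r + 1)) (Fin n) (MvPolynomial σ K)} {x : σ → K}
    (hM : ∀ s : Fin (r + 1) → Fin n, StrictMono s → eval x (M.submatrix id s).det = 0)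
    {s : Fin r → Fin n} (hs : columnCofactors (M.map (eval x)) s ≠ 0)
    (hinj : ∀ u, M.map (eval x) *ᵥ u = 0 →
      (∀ l, columnCofactors (M.map (eval x)) s ⬝ᵥ pderivMatrix M x l *ᵥ u = 0) → u = 0) :
    n - r ≤ (minorJacobian M x).rank := by
  set A := M.map (eval x)
  set w := columnCofactors A s
  let B : Matrix σ (Fin n) K := Matrix.of fun l ↦ w ᵥ* pderivMatrix M x l
  have B_mulVec (u : Fin n → K) (l : σ) : (B *ᵥ u) l = w ⬝ᵥ pderivMatrix M x l *ᵥ u := by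
    rw [Matrix.dotProduct_mulVec]
    rfl
  let φ := B.mulVecLin.domRestrict (LinearMap.ker A.mulVecLin)
  have φ_injective : Function.Injective φ := by
    rw [← LinearMap.ker_eq_bot, LinearMap.ker_eq_bot']
    rintro ⟨u, hu⟩ hφ
    exact Subtype.ext (hinj u hu fun l ↦ (B_mulVec u l).symm.trans (congrFun hφ l))
  have range_φ_le :
      LinearMap.range φ ≤ Submodule.span K (Set.range (minorJacobian M x).row) := by
    rintro _ ⟨⟨u, hu⟩, rfl⟩
    have hφ : φ ⟨u, hu⟩ = ∑ k, u k • fun l ↦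
        eval x (pderiv l (M.submatrix id (Fin.cons k s : Fin (r + 1) → Fin n)).det) := by
      ext l
      rw [Finset.sum_apply]
      exact (B_mulVec u l).trans (sum_mul_eval_pderiv_det_submatrix_cons (M := M) hu l s).symm
    rw [hφ]
    exact sum_mem fun k _ ↦ Submodule.smul_mem _ _ (gradient_det_submatrix_mem_span M x _)
  have rank_A : A.rank < r + 1 := by
    simpa using rank_lt_card_of_vecMul_eq_zero hs (columnCofactors_vecMul_eq_zero hM s)
  have rank_add_nullity := LinearMap.finrank_range_add_finrank_ker A.mulVecLin
  rw [Module.finrank_fin_fun] at rank_add_nullity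
  calc n - r ≤ Module.finrank K (LinearMap.ker A.mulVecLin) := by
        rw [Matrix.rank] at rank_A
        omega
    _ = Module.finrank K (LinearMap.range φ) := (LinearMap.finrank_range_of_inj φ_injective).symm
    _ ≤ _ := Submodule.finrank_mono range_φ_le
    _ = (minorJacobian M x).rank := (Matrix.rank_eq_finrank_span_row _).symm

end MaximalMinors

section InverseGaussian

variable {n : ℕ} {X U : ℕ → ℂ} {w : Fin 3 → ℂ}

/-- `(X 0, …, X (n + 1))` lies on the line `m_0 = ⋯ = m_{d-2} = 0`, with `d = n + 1`. Here and below
points are given by sequences, so that recurrences need no bounds on the indices. -/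
def OnLine (n : ℕ) (X : ℕ → ℂ) : Prop :=
  ∀ i < n, X i = 0

/-- `(X 0, …, X (n + 1))` satisfies `m_1 = ⋯ = m_d = 0`, with `d = n + 1`. -/
def AtPoint (n : ℕ) (X : ℕ → ℂ) : Prop :=
  ∀ i ≤ n, X (i + 1) = 0

/-- The value of `H`, with `d = n + 1`, at the point `(X 0, …, X (n + 1))`. -/
noncomputable def invGaussValue (n : ℕ) (X : ℕ → ℂ) : Matrix (Fin 3) (Fin (n + 1)) ℂ :=
  (invGaussMatrix (n + 1)).map (eval (X ∘ Fin.val))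

/-- The partial derivative `∂H/∂m_l`, with `d = n + 1`, at the point `(X 0, …, X (n + 1))`. -/
noncomputable def invGaussDeriv (n : ℕ) (X : ℕ → ℂ) (l : Fin (n + 2)) :
    Matrix (Fin 3) (Fin (n + 1)) ℂ :=
  pderivMatrix (invGaussMatrix (n + 1)) (X ∘ Fin.val) l

theorem onLine_iff (hn : 0 < n) :
    OnLine n X ↔ ∀ i : Fin (n + 2), i.val ≤ n - 1 → X i = 0 :=
  ⟨fun h i hi ↦ h i (by omega), fun h i hi ↦ h ⟨i, by omega⟩ (Nat.le_sub_one_of_lt hi)⟩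

theorem atPoint_iff : AtPoint n X ↔ ∀ i : Fin (n + 2), 1 ≤ i.val → X i = 0 := by
  simp [AtPoint, Fin.forall_fin_succ (n := n + 1), Fin.forall_iff]

theorem invGaussValue_zero (r : Fin 3) : invGaussValue n X r 0 = ![X 0 ^ 2, 0, X 1 ^ 2] r := by
  fin_cases r <;> simp [invGaussValue, invGaussMatrix]

theorem invGaussValue_succ (r : Fin 3) (c : Fin n) :
    invGaussValue n X r c.succ = ![X c, (2 * c + 1) * X (c + 1), X (c + 2)] r := by
  have hcoeff : (2 * ((c : ℂ) + 1) - 1) = 2 * c + 1 := by ring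
  fin_cases r <;> simp [invGaussValue, invGaussMatrix, hcoeff]

theorem invGaussDeriv_zero (l : Fin (n + 2)) (r : Fin 3) :
    invGaussDeriv n X l r 0 =
      ![if 0 = l then 2 * X 0 else 0, 0, if 1 = l then 2 * X 1 else 0] r := by
  fin_cases r <;>
    simp [invGaussDeriv, pderivMatrix, invGaussMatrix, eval_pderiv_X, -pderiv_X]

theorem invGaussDeriv_succ (l : Fin (n + 2)) (r : Fin 3) (c : Fin n) :
    invGaussDeriv n X l r c.succ =
      (![if (c : ℕ) = l then 1 else 0, if (c : ℕ) + 1 = l then 2 * (c : ℂ) + 1 else 0,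
        if (c : ℕ) + 2 = l then 1 else 0] : Fin 3 → ℂ) r := by
  have hcoeff : 2 * ((c : ℂ) + 1) - 1 = 2 * c + 1 := by ring
  fin_cases r <;>
    simp only [invGaussDeriv, pderivMatrix, invGaussMatrix, Matrix.map_apply, Matrix.of_apply,
      Fin.val_succ, Nat.succ_ne_zero, if_false] <;>
    simp [eval_pderiv_X, hcoeff, -pderiv_X, Fin.ext_iff]

theorem invGaussDeriv_one_mulVec (hU : ∀ i, n < i → U i = 0) :
    invGaussDeriv n X 1 *ᵥ (U ∘ Fin.val) = ![U 2, U 1, 2 * X 1 * U 0] := by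
  have hrow₀ := sum_fin_ite_eq (f := fun c ↦ U (c + 1)) 1 fun h ↦ hU _ (Nat.lt_succ_of_le h)
  have hrow₁ := sum_fin_ite_eq (f := fun c ↦ (2 * c + 1) * U (c + 1)) 0 fun h ↦ by
    rw [hU _ (Nat.lt_succ_of_le h), mul_zero]
  ext r
  rw [mulVec_comp_val]
  fin_cases r
  · simpa [invGaussDeriv_zero, invGaussDeriv_succ] using hrow₀
  · simpa [invGaussDeriv_zero, invGaussDeriv_succ] using hrow₁
  · simp [invGaussDeriv_zero, invGaussDeriv_succ]

theorem invGaussDeriv_add_two_mulVec (hU : ∀ i, n < i → U i = 0) {j : ℕ} (hj : j < n) :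
    invGaussDeriv n X ⟨j + 2, by omega⟩ *ᵥ (U ∘ Fin.val) =
      ![U (j + 3), (2 * j + 3) * U (j + 2), U (j + 1)] := by
  have hrow₀ := sum_fin_ite_eq (f := fun c ↦ U (c + 1)) (j + 2) fun h ↦
    hU _ (Nat.lt_succ_of_le h)
  have hrow₁ := sum_fin_ite_eq (f := fun c ↦ (2 * c + 1) * U (c + 1)) (j + 1) fun h ↦ by
    rw [hU _ (Nat.lt_succ_of_le h), mul_zero]
  have hrow₂ := sum_fin_ite_eq (f := fun c ↦ U (c + 1)) j fun h ↦ hU _ (Nat.lt_succ_of_le h)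
  ext r
  rw [mulVec_comp_val]
  fin_cases r
  · simpa [invGaussDeriv_zero, invGaussDeriv_succ] using hrow₀
  · have hcoeff : 2 * ((j : ℂ) + 1) + 1 = 2 * j + 3 := by ring
    simpa [invGaussDeriv_zero, invGaussDeriv_succ, hcoeff] using hrow₁
  · simpa [invGaussDeriv_zero, invGaussDeriv_succ] using hrow₂

theorem vecMul_invGaussValue_zero (hw : w ᵥ* invGaussValue n X = 0) :
    w 0 * X 0 ^ 2 + w 2 * X 1 ^ 2 = 0 := by
  simpa [Matrix.vecMul, dotProduct, Fin.sum_univ_three, invGaussValue_zero] using congrFun hw 0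

theorem vecMul_invGaussValue_succ (hw : w ᵥ* invGaussValue n X = 0) {c : ℕ} (hc : c < n) :
    w 0 * X c + (2 * c + 1) * w 1 * X (c + 1) + w 2 * X (c + 2) = 0 := by
  have h : w 0 * X c + w 1 * ((2 * c + 1) * X (c + 1)) + w 2 * X (c + 2) = 0 := by
    simpa [Matrix.vecMul, dotProduct, Fin.sum_univ_three, invGaussValue_succ, -Fin.succ_mk] using
      congrFun hw (Fin.succ ⟨c, hc⟩)
  linear_combination h

theorem onLine_of_vecMul_eq_zero_of_two_eq_zero (hw : w ᵥ* invGaussValue n X = 0)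
    (hw₂ : w 2 = 0) (hw₀ : w 0 ≠ 0) : OnLine n X := by
  intro i
  induction i with
  | zero =>
    intro _
    simpa [hw₂, hw₀] using vecMul_invGaussValue_zero hw
  | succ i ih =>
    intro hi
    have hprev := vecMul_invGaussValue_succ hw (Nat.lt_of_succ_lt hi)
    have hnext := vecMul_invGaussValue_succ hw hi
    have hprod : w 1 * X (i + 1) = 0 := by
      simpa [ih (Nat.lt_of_succ_lt hi), hw₂, two_mul_natCast_add_one_ne_zero] using hprev
    obtain hw₁ | hX := mul_eq_zero.mp hprod
    · simpa [hw₁, hw₂, hw₀] using hnext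
    · exact hX

theorem tail_eq_zero_of_conormal_eq_zero_of_two_ne_zero (hw₂ : w 2 ≠ 0)
    (hU : ∀ i, n < i → U i = 0)
    (hcon : ∀ l, w ⬝ᵥ invGaussDeriv n X l *ᵥ (U ∘ Fin.val) = 0) : ∀ i, U (i + 1) = 0 := by
  suffices h : ∀ k i, n ≤ i + k → U (i + 1) = 0 from fun i ↦ h n i (Nat.le_add_left n i)
  intro k
  induction k with
  | zero => exact fun i hi ↦ hU _ (Nat.lt_succ_of_le hi)
  | succ k ih =>
    intro i hi
    obtain hi' | hi' := le_or_gt n i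
    · exact hU _ (Nat.lt_succ_of_le hi')
    have h := hcon ⟨i + 2, by omega⟩
    rw [invGaussDeriv_add_two_mulVec hU hi'] at h
    simpa [dotProduct, Fin.sum_univ_three, ih (i + 1) (by omega), ih (i + 2) (by omega), hw₂]
      using h

theorem tail_eq_zero_of_conormal_eq_zero_of_one_ne_zero (hw₀ : w 0 = 0) (hw₁ : w 1 ≠ 0)
    (hw₂ : w 2 = 0) (hU : ∀ i, n < i → U i = 0)
    (hcon : ∀ l, w ⬝ᵥ invGaussDeriv n X l *ᵥ (U ∘ Fin.val) = 0) : ∀ i, U (i + 1) = 0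
  | 0 => by
    have h := hcon 1
    rw [invGaussDeriv_one_mulVec hU] at h
    simpa [dotProduct, Fin.sum_univ_three, hw₀, hw₁, hw₂] using h
  | j + 1 => by
    obtain hj | hj := le_or_gt n j
    · exact hU _ (by omega)
    have h := hcon ⟨j + 2, by omega⟩
    rw [invGaussDeriv_add_two_mulVec hU hj] at h
    have hodd : 2 * (j : ℂ) + 3 ≠ 0 := mod_cast Nat.succ_ne_zero (2 * j + 2)
    simpa [dotProduct, Fin.sum_univ_three, hw₀, hw₁, hw₂, hodd] using h

theorem head_eq_zero_of_mulVec_eq_zero (hker : invGaussValue n X *ᵥ (U ∘ Fin.val) = 0)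
    (htail : ∀ i, U (i + 1) = 0) (hX : X 0 ≠ 0 ∨ X 1 ≠ 0) : U 0 = 0 := by
  have hrow (r : Fin 3) : invGaussValue n X r 0 * U 0 = 0 := by
    simpa only [mulVec_comp_val, htail, mul_zero, Finset.sum_const_zero, add_zero, Pi.zero_apply]
      using congrFun hker r
  obtain hX | hX := hX
  · simpa [invGaussValue_zero, hX] using hrow 0
  · simpa [invGaussValue_zero, hX] using hrow 2

theorem onLine_of_vecMul_eq_zero_of_two_ne_zero (hw : w ᵥ* invGaussValue n X = 0)
    (hw₂ : w 2 ≠ 0) (hX₀ : X 0 = 0) (hX₁ : X 1 = 0) : OnLine n X := by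
  intro i
  induction i using Nat.strong_induction_on with
  | _ i ih =>
    intro hi
    match i with
    | 0 => exact hX₀
    | 1 => exact hX₁
    | c + 2 =>
      have h := vecMul_invGaussValue_succ hw (c := c) (by omega)
      simpa [ih c (by omega) (by omega), ih (c + 1) (by omega) (by omega), hw₂] using h

theorem eq_zero_of_mulVec_eq_zero_of_conormal_eq_zero (hw : w ᵥ* invGaussValue n X = 0)
    (hw_ne : w ≠ 0) (hX : ¬OnLine n X) (hU : ∀ i, n < i → U i = 0)
    (hker : invGaussValue n X *ᵥ (U ∘ Fin.val) = 0)
    (hcon : ∀ l, w ⬝ᵥ invGaussDeriv n X l *ᵥ (U ∘ Fin.val) = 0) : ∀ i, U i = 0 := by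
  suffices h : (∀ i, U (i + 1) = 0) ∧ (X 0 ≠ 0 ∨ X 1 ≠ 0) from
    fun | 0 => head_eq_zero_of_mulVec_eq_zero hker h.1 h.2 | i + 1 => h.1 i
  by_cases hw₂ : w 2 = 0
  · have hw₀ : w 0 = 0 :=
      by_contra fun hw₀ ↦ hX (onLine_of_vecMul_eq_zero_of_two_eq_zero hw hw₂ hw₀)
    have hw₁ : w 1 ≠ 0 := fun hw₁ ↦ hw_ne <| by
      ext r
      fin_cases r <;> assumption
    refine ⟨tail_eq_zero_of_conormal_eq_zero_of_one_ne_zero hw₀ hw₁ hw₂ hU hcon, .inl ?_⟩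
    refine fun hX₀ ↦ hX ?_
    rintro (_ | i) hi
    · exact hX₀
    · simpa [hw₀, hw₁, hw₂, two_mul_natCast_add_one_ne_zero] using
        vecMul_invGaussValue_succ hw (Nat.lt_of_succ_lt hi)
  · refine ⟨tail_eq_zero_of_conormal_eq_zero_of_two_ne_zero hw₂ hU hcon, ?_⟩
    contrapose! hX
    exact onLine_of_vecMul_eq_zero_of_two_ne_zero hw hw₂ hX.1 hX.2

theorem exists_columnCofactors_invGaussValue_ne_zero (hline : ¬OnLine n X)
    (hpoint : ¬AtPoint n X) : ∃ s, columnCofactors (invGaussValue n X) s ≠ 0 := by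
  by_contra! hcof
  by_cases hX₀ : X 0 = 0
  · refine hline fun i ↦ ?_
    induction i with
    | zero => exact fun _ ↦ hX₀
    | succ i ih =>
      intro hi
      have h := (mul_eq_mul_of_columnCofactors_eq_zero
        (hcof ![Fin.succ ⟨i, by omega⟩, Fin.succ ⟨i + 1, hi⟩])).1
      simp only [invGaussValue_succ] at h
      simpa [ih (by omega), two_mul_natCast_add_one_ne_zero] using h
  · have hcol (c : Fin n) := mul_eq_mul_of_columnCofactors_eq_zero (hcof ![0, c.succ])
    simp only [invGaussValue_zero, invGaussValue_succ] at hcol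
    have hn : 0 < n := by
      contrapose! hline
      exact fun i hi ↦ by omega
    have hX₁ : X 1 = 0 := by simpa [hX₀] using (hcol ⟨0, hn⟩).1
    refine hpoint ?_
    rintro (_ | c) hi
    · exact hX₁
    · simpa [hX₀, hX₁] using (hcol ⟨c, hi⟩).2

theorem sub_one_le_rank_minorJacobian_invGaussMatrix
    (hM : ∀ s : Fin 3 → Fin (n + 1), StrictMono s →
      eval (X ∘ Fin.val) ((invGaussMatrix (n + 1)).submatrix id s).det = 0)
    (hline : ¬OnLine n X) (hpoint : ¬AtPoint n X) :
    n - 1 ≤ (minorJacobian (invGaussMatrix (n + 1)) (X ∘ Fin.val)).rank := by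
  obtain ⟨s, hs⟩ := exists_columnCofactors_invGaussValue_ne_zero hline hpoint
  refine sub_le_rank_minorJacobian hM hs fun u hker hcon ↦ ?_
  obtain ⟨U, rfl, hU⟩ := exists_seq_eq_comp_val u
  have hw := columnCofactors_vecMul_eq_zero hM s
  ext i
  exact eq_zero_of_mulVec_eq_zero_of_conormal_eq_zero hw hs hline hU hker hcon i

theorem rank_minorJacobian_eq_zero_of_atPoint (hX : AtPoint n X) :
    (minorJacobian (invGaussMatrix (n + 1)) (X ∘ Fin.val)).rank = 0 := by
  suffices h : minorJacobian (invGaussMatrix (n + 1)) (X ∘ Fin.val) = 0 by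
    rw [h, Matrix.rank_zero]
  have hrow₁ (k : Fin (n + 1)) : invGaussValue n X 1 k = 0 := by
    cases k using Fin.cases with
    | zero => simp [invGaussValue_zero]
    | succ c => simp [invGaussValue_succ, hX c c.is_lt.le]
  have hrow₂ (k : Fin (n + 1)) : invGaussValue n X 2 k = 0 := by
    cases k using Fin.cases with
    | zero => simp [invGaussValue_zero, hX 0]
    | succ c => simp [invGaussValue_succ, hX (c + 1) c.is_lt]
  ext s l
  exact eval_pderiv_det_eq_zero_of_rows (M := (invGaussMatrix (n + 1)).submatrix id s.val)
    (by decide : (1 : Fin 3) ≠ 2) (fun k ↦ hrow₁ (s.val k)) (fun k ↦ hrow₂ (s.val k)) l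

theorem invGaussValue_col_eq_zero_of_onLine (hX : OnLine n X) {k : Fin (n + 1)}
    (hk : (k : ℕ) + 2 ≤ n) : (invGaussValue n X).col k = 0 := by
  ext r
  cases k using Fin.cases with
  | zero =>
    have hn : 2 ≤ n := by simpa using hk
    fin_cases r <;> simp [invGaussValue_zero, hX 0 (by omega), hX 1 (by omega)]
  | succ c =>
    rw [Fin.val_succ] at hk
    fin_cases r <;> simp [invGaussValue_succ, hX c (by omega), hX (c + 1) (by omega),
      hX (c + 2) (by omega)]

theorem invGaussDeriv_row_zero_eq_zero_of_onLine (hX : OnLine n X) {k : Fin (n + 1)}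
    {l : Fin (n + 2)} (hk : (k : ℕ) + 2 ≤ n) (hl : n ≤ l + 2) : invGaussDeriv n X l 0 k = 0 := by
  cases k using Fin.cases with
  | zero => simp [invGaussDeriv_zero, hX 0 (by omega)]
  | succ c =>
    rw [Fin.val_succ] at hk
    have hcl : (c : ℕ) ≠ l := by omega
    simp [invGaussDeriv_succ, hcl]

theorem eval_pderiv_det_eq_zero_of_onLine (hX : OnLine n X) {s : Fin 3 → Fin (n + 1)}
    (hs : StrictMono s) {l : Fin (n + 2)} (hl : n ≤ l + 2) :
    eval (X ∘ Fin.val) (pderiv l ((invGaussMatrix (n + 1)).submatrix id s).det) = 0 := by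
  have h₀₁ : s 0 < s 1 := hs (by decide)
  have h₁₂ : s 1 < s 2 := hs (by decide)
  have hs₀ : (s 0 : ℕ) + 2 ≤ n := by omega
  have hrow₀ (k : Fin (n + 1)) : invGaussValue n X 0 k = 0 := by
    cases k using Fin.cases with
    | zero => simp [invGaussValue_zero, hX 0 (by omega)]
    | succ c => simp [invGaussValue_succ, hX c c.is_lt]
  rw [← Fin.cons_self_tail s, eval_pderiv_det_submatrix_cons]
  change columnCofactors (invGaussValue n X) _ ⬝ᵥ (invGaussDeriv n X l).col (s 0) +
    _ ⬝ᵥ (invGaussValue n X).col (s 0) = 0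
  rw [invGaussValue_col_eq_zero_of_onLine hX hs₀, dotProduct_zero, add_zero]
  refine Finset.sum_eq_zero fun r _ ↦ ?_
  obtain rfl | hr := eq_or_ne r 0
  · exact mul_eq_zero_of_right _ (invGaussDeriv_row_zero_eq_zero_of_onLine hX hs₀ hl)
  · exact mul_eq_zero_of_left (columnCofactors_apply_eq_zero_of_row hrow₀ hr _) _

theorem rank_minorJacobian_le_of_onLine (hX : OnLine n X) :
    (minorJacobian (invGaussMatrix (n + 1)) (X ∘ Fin.val)).rank ≤ n - 2 := by
  have hcard : (Finset.Iio (⟨n - 2, by omega⟩ : Fin (n + 2))).card = n - 2 := Fin.card_Iio _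
  rw [← Matrix.rank_transpose, ← hcard]
  refine Matrix.rank_le_card_of_support_subset _ _ (Function.support_subset_iff'.mpr fun l hl ↦ ?_)
  rw [Finset.coe_Iio, Set.mem_Iio, not_lt, Fin.le_def] at hl
  ext s
  exact eval_pderiv_det_eq_zero_of_onLine hX s.2 (Nat.sub_le_iff_le_add.mp hl)

end InverseGaussian

/-- Singular locus of the inverse Gaussian moment variety via the Jacobian criterion:
for a nonzero point `x` of the affine cone, the Jacobian matrix of the `3 × 3` minors of
`H` has rank `< d - 2` at `x` if and only if `x₀ = ⋯ = x_{d-2} = 0` (the line) or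
`x₁ = ⋯ = x_d = 0` (the point). -/
theorem invGauss_singularLocus (d : ℕ) (hd : 3 ≤ d) (x : Fin (d + 1) → ℂ) (hx : x ≠ 0)
    (hvan : ∀ s : Fin 3 → Fin d, StrictMono s →
      eval x (((invGaussMatrix d).submatrix id s).det) = 0) :
    (Matrix.of fun (s : {s : Fin 3 → Fin d // StrictMono s}) (l : Fin (d + 1)) =>
        eval x (pderiv l (((invGaussMatrix d).submatrix id s.val).det))).rank < d - 2 ↔
      ((∀ i : Fin (d + 1), i.val ≤ d - 2 → x i = 0) ∨
        (∀ i : Fin (d + 1), 1 ≤ i.val → x i = 0)) := by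
  obtain ⟨n, rfl⟩ : ∃ n, d = n + 1 := Nat.exists_eq_add_of_le' (Nat.one_le_of_lt hd)
  obtain ⟨X, rfl, -⟩ := exists_seq_eq_comp_val x
  have hline : OnLine n X ↔ _ := onLine_iff (by omega)
  have hpoint : AtPoint n X ↔ _ := atPoint_iff
  refine Iff.trans ?_ (or_congr hline hpoint)
  change (minorJacobian (invGaussMatrix (n + 1)) (X ∘ Fin.val)).rank < n - 1 ↔ _
  constructor
  · contrapose!
    rintro ⟨hnotLine, hnotPoint⟩
    exact sub_one_le_rank_minorJacobian_invGaussMatrix hvan hnotLine hnotPoint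
  · rintro (hX | hX)
    · exact (rank_minorJacobian_le_of_onLine hX).trans_lt (by omega)
    · exact (rank_minorJacobian_eq_zero_of_atPoint hX).trans_lt (by omega)
end

section
/- For every integer d ≥ 3, the vanishing ideal of the affine cone C_Γ ⊆ ℂ^{d+1} over the gamma moment parameterization equals the ideal I = I_3(G) generated by the 3×3 minors of G; that is, a polynomial f ∈ ℂ[m_0,…,m_d] vanishes at every point of C_Γ if and only if f ∈ I. -/
open MvPolynomial

/-- The `3 × d` matrix `G` of the gamma moment variety: its `c`-th column, for `1 ≤ c ≤ d`,
is `((c-1)·m_{c-1}, m_{c-1}, m_c)ᵀ`.  Columns are indexed by `Fin d`, with `c : Fin d`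
corresponding to the paper's column `c + 1`. -/
noncomputable def gammaMatrix (d : ℕ) :
    Matrix (Fin 3) (Fin d) (MvPolynomial (Fin (d + 1)) ℂ) :=
  Matrix.of fun r c =>
    ![C (c.val : ℂ) * X ⟨c.val, by have := c.isLt; omega⟩,
      X ⟨c.val, by have := c.isLt; omega⟩,
      X ⟨c.val + 1, by have := c.isLt; omega⟩] r

/-- The ideal `I₃(G)` generated by all `3 × 3` minors of `G`, i.e. determinants of
submatrices obtained by choosing `3` of the `d` columns. -/
noncomputable def gammaIdeal (d : ℕ) : Ideal (MvPolynomial (Fin (d + 1)) ℂ) :=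
  Ideal.span
    { p | ∃ s : Fin 3 → Fin d, StrictMono s ∧ p = ((gammaMatrix d).submatrix id s).det }

/-- The gamma moment sequence: `m₀ = 1` and `mᵢ = θ·(k + i - 1)·m_{i-1}` for `i ≥ 1`,
i.e. `mᵢ = θⁱ·k(k+1)⋯(k+i-1)`. -/
noncomputable def gammaMoment (k θ : ℂ) : ℕ → ℂ
  | 0 => 1
  | n + 1 => θ * (k + (n : ℂ)) * gammaMoment k θ n

/-!
On the cone, the recursion `m_c = θ k m_{c-1} + θ (c-1) m_{c-1}` is a linear relation between the
rows of `G`, so the minors vanish there. Conversely, modulo the minors every monomial is a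
combination of standard ones, those divisible by no `m_a m_b m_{c+1}` with `a < b < c`, whose
supports lie in sets `{a, b, b+1}`. It remains to see that a combination of standard monomials
which vanishes on the cone is zero. Scaling by `t` and by `θ` separates degrees and weights
`∑ i μᵢ`, so both may be fixed. At `t = θ = 1` the monomials then become the polynomials
`∏ (k(k+1)⋯(k+i-1))^μᵢ` in `k`, whose multiplicity of the root `-a` is `∑_{i>a} μᵢ`. Given finitely
many of them, let `a` be the least index occurring in any. A standard exponent vector is determined
by its degree, its weight and its entry at `a` if that is nonzero, so the greatest entry at `a`, and
with it the least multiplicity at `-a`, is attained only once. Hence they are linearly independent.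
-/

namespace GammaVariety

section RootMultiplicity

variable {R : Type*} [CommRing R] [IsDomain R]

theorem linearIndepOn_of_forall_exists_rootMultiplicity_lt {ι : Type*} {s : Set ι}
    {p : ι → Polynomial R}
    (hp : ∀ i ∈ s, p i ≠ 0)
    (h : ∀ T : Finset ι, ↑T ⊆ s → T.Nonempty → ∃ x, ∃ i ∈ T, ∀ j ∈ T, j ≠ i →
      (p i).rootMultiplicity x < (p j).rootMultiplicity x) :
    LinearIndepOn R p s := by
  classical
  refine linearIndepOn_iff'.mpr fun T g hT hsum => ?_
  by_contra! hg
  obtain ⟨x, i, hi, hlt⟩ := h {i ∈ T | g i ≠ 0}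
    (fun j hj => hT (Finset.mem_filter.mp hj).1) (Finset.filter_nonempty_iff.mpr hg)
  obtain ⟨hiT, hgi⟩ := Finset.mem_filter.mp hi
  have hdvd : (Polynomial.X - Polynomial.C x) ^ ((p i).rootMultiplicity x + 1) ∣ g i • p i := by
    rw [← Finset.add_sum_erase T _ hiT] at hsum
    rw [eq_neg_of_add_eq_zero_left hsum, dvd_neg]
    refine Finset.dvd_sum fun j hj => ?_
    obtain ⟨hji, hjT⟩ := Finset.mem_erase.mp hj
    by_cases hgj : g j = 0
    · simp [hgj]
    · exact dvd_smul_of_dvd _ ((pow_dvd_pow _ (hlt j (Finset.mem_filter.mpr ⟨hjT, hgj⟩) hji)).trans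
        (Polynomial.pow_rootMultiplicity_dvd _ _))
  have hne : g i • p i ≠ 0 := smul_ne_zero hgi (hp i (hT hiT))
  rw [← Polynomial.le_rootMultiplicity_iff hne, Polynomial.smul_eq_C_mul,
    Polynomial.rootMultiplicity_mul (by rwa [← Polynomial.smul_eq_C_mul]),
    Polynomial.rootMultiplicity_C] at hdvd
  omega

theorem rootMultiplicity_neg_natCast_ascPochhammer [CharZero R] (a n : ℕ) :
    (ascPochhammer R n).rootMultiplicity (-(a : R)) = if a < n then 1 else 0 := by
  classical
  induction n with
  | zero => simp
  | succ n ih =>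
    have hX : Polynomial.X + (n : Polynomial R) = Polynomial.X - Polynomial.C (-(n : R)) := by simp
    rw [ascPochhammer_succ_right, Polynomial.rootMultiplicity_mul, ih, hX,
      Polynomial.rootMultiplicity_X_sub_C]
    · simp only [neg_inj, Nat.cast_inj]
      grind
    · rw [← ascPochhammer_succ_right]
      exact (monic_ascPochhammer R _).ne_zero

end RootMultiplicity

section ShapePolynomial

variable {n : ℕ} {R : Type*} [CommRing R]

variable (R) in
/-- The value of the monomial with exponent vector `μ` at the moments of the gamma distribution
of scale `1`, as a polynomial in the shape parameter. -/
noncomputable def shapePolynomial (μ : Fin n →₀ ℕ) : Polynomial R :=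
  ∏ i : Fin n, ascPochhammer R i ^ μ i

theorem eval_eval_ascPochhammer (f : MvPolynomial (Fin n) R) (k : R) :
    eval (fun i : Fin n => (ascPochhammer R i).eval k) f =
      (∑ μ ∈ f.support, coeff μ f • shapePolynomial R μ).eval k := by
  simp only [eval_eq', Polynomial.eval_finsetSum, Polynomial.eval_smul, shapePolynomial,
    Polynomial.eval_prod, Polynomial.eval_pow, smul_eq_mul]

variable [IsDomain R]

theorem shapePolynomial_ne_zero (μ : Fin n →₀ ℕ) : shapePolynomial R μ ≠ 0 :=
  Finset.prod_ne_zero_iff.mpr fun i _ => pow_ne_zero _ (monic_ascPochhammer R i).ne_zero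

theorem rootMultiplicity_neg_natCast_shapePolynomial [CharZero R] (μ : Fin n →₀ ℕ) (a : Fin n) :
    (shapePolynomial R μ).rootMultiplicity (-(a : R)) = ∑ i ∈ Finset.Ioi a, μ i := by
  classical
  have hne := shapePolynomial_ne_zero (R := R) μ
  rw [shapePolynomial] at hne ⊢
  rw [← Polynomial.count_roots, Polynomial.roots_prod _ _ hne, Multiset.count_bind]
  simp only [Polynomial.roots_pow, Multiset.count_nsmul, Polynomial.count_roots,
    rootMultiplicity_neg_natCast_ascPochhammer, mul_ite, mul_one, mul_zero, Fin.val_fin_lt]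
  rw [← Finset.sum_eq_multiset_sum, ← Finset.sum_filter, Finset.filter_lt_eq_Ioi]

end ShapePolynomial

section WeightedScaling

variable {R σ : Type*}

theorem coeff_aeval_X_pow_mul_C [CommSemiring R] (w : σ → ℕ) (x : σ → R) (f : MvPolynomial σ R)
    (n : ℕ) :
    (aeval (fun i => Polynomial.X ^ w i * Polynomial.C (x i)) f).coeff n =
      eval x (weightedHomogeneousComponent w n f) := by
  classical
  induction f using MvPolynomial.induction_on' with
  | add p q hp hq => simp only [map_add, Polynomial.coeff_add, hp, hq]
  | monomial μ a =>
    have hprod : (μ.prod fun i e => (Polynomial.X ^ w i * Polynomial.C (x i)) ^ e) =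
        Polynomial.X ^ Finsupp.weight w μ * Polynomial.C (μ.prod fun i e => x i ^ e) := by
      simp only [Finsupp.prod, Finsupp.weight_apply, Finsupp.sum, mul_pow, Finset.prod_mul_distrib,
        ← pow_mul, Finset.prod_pow_eq_pow_sum, smul_eq_mul, mul_comm (w _), map_prod, map_pow]
    have hmon := isWeightedHomogeneous_monomial w μ a rfl
    rw [aeval_monomial, hprod, Polynomial.algebraMap_apply, Algebra.algebraMap_self_apply,
      Polynomial.coeff_C_mul, Polynomial.coeff_mul_C, Polynomial.coeff_X_pow]
    by_cases hn : n = Finsupp.weight w μ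
    · rw [hn, hmon.weightedHomogeneousComponent_same, eval_monomial, if_pos rfl, one_mul]
    · rw [hmon.weightedHomogeneousComponent_ne _ hn, if_neg hn, map_zero, zero_mul, mul_zero]

theorem eval_weightedHomogeneousComponent_eq_zero [CommRing R] [IsDomain R] [Infinite R]
    (w : σ → ℕ) {x : σ → R} {f : MvPolynomial σ R}
    (h : ∀ t : R, eval (fun i => t ^ w i * x i) f = 0) (n : ℕ) :
    eval x (weightedHomogeneousComponent w n f) = 0 := by
  have hzero : aeval (fun i => Polynomial.X ^ w i * Polynomial.C (x i)) f = 0 := by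
    refine Polynomial.funext fun t => ?_
    rw [← Polynomial.coe_aeval_eq_eval, comp_aeval_apply, map_zero, ← h t, ← aeval_eq_eval]
    simp only [map_mul, map_pow, Polynomial.aeval_X, Polynomial.aeval_C,
      Algebra.algebraMap_self_apply]
  rw [← coeff_aeval_X_pow_mul_C, hzero, Polynomial.coeff_zero]

end WeightedScaling

section ExponentVectors

variable {n d : ℕ}

/-- An exponent vector is balanced if any two indices in its support differ by at most one. -/
def IsBalanced (μ : Fin n →₀ ℕ) : Prop :=
  ∀ ⦃i j : Fin n⦄, μ i ≠ 0 → μ j ≠ 0 → (j : ℕ) ≤ i + 1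

theorem IsBalanced.exists_forall_eq_or_eq {μ : Fin n →₀ ℕ} (hμ : IsBalanced μ) (h0 : μ ≠ 0) :
    ∃ b, μ b ≠ 0 ∧ ∀ i, μ i ≠ 0 → (i : ℕ) = b ∨ (i : ℕ) = b + 1 := by
  obtain ⟨b, hb, hmin⟩ :=
    exists_minimal_of_wellFoundedLT (fun i => μ i ≠ 0) (by simpa using Finsupp.ne_iff.mp h0)
  refine ⟨b, hb, fun i hi => ?_⟩
  have hle : b ≤ i := (le_total i b).elim (hmin hi) id
  have := hμ hb hi
  have : (b : ℕ) ≤ i := hle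
  omega

theorem weight_val_div_degree {μ : Fin n →₀ ℕ} {b : Fin n} (hb : μ b ≠ 0)
    (hμ : ∀ i, μ i ≠ 0 → (i : ℕ) = b ∨ (i : ℕ) = b + 1) :
    Finsupp.weight Fin.val μ / μ.degree = b := by
  rw [Finsupp.weight_eq_sum, Finsupp.degree_eq_sum]
  simp only [smul_eq_mul]
  refine Nat.div_eq_of_lt_le ?_ ?_
  · rw [mul_comm, Finset.sum_mul]
    refine Finset.sum_le_sum fun i _ => ?_
    by_cases hi : μ i = 0
    · simp [hi]
    · have := hμ i hi
      exact Nat.mul_le_mul_left _ (by omega)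
  · rw [mul_comm, Finset.sum_mul]
    refine Finset.sum_lt_sum (fun i _ => ?_) ⟨b, Finset.mem_univ b, ?_⟩
    · by_cases hi : μ i = 0
      · simp [hi]
      · have := hμ i hi
        exact Nat.mul_le_mul_left _ (by omega)
    · exact Nat.mul_lt_mul_of_pos_left (Nat.lt_succ_self _) (Nat.pos_of_ne_zero hb)

theorem eq_of_degree_eq_of_weight_eq {μ ν : Fin n →₀ ℕ} {b : ℕ}
    (hμ : ∀ i, μ i ≠ 0 → (i : ℕ) = b ∨ (i : ℕ) = b + 1)
    (hν : ∀ i, ν i ≠ 0 → (i : ℕ) = b ∨ (i : ℕ) = b + 1)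
    (hdeg : μ.degree = ν.degree) (hwt : Finsupp.weight Fin.val μ = Finsupp.weight Fin.val ν) :
    μ = ν := by
  have hmoment (z : ℤ) : ∑ i : Fin n, ((μ i : ℤ) - ν i) * (i - z) = 0 := by
    simp only [Finsupp.degree_eq_sum, Finsupp.weight_eq_sum, smul_eq_mul] at hdeg hwt
    zify at hdeg hwt
    simp only [mul_sub, sub_mul, Finset.sum_sub_distrib, ← Finset.sum_mul, hdeg, hwt, sub_self]
  ext j
  by_cases hj : (j : ℕ) = b ∨ (j : ℕ) = b + 1
  · have hsum := hmoment (2 * b + 1 - j)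
    rw [Finset.sum_eq_single j] at hsum
    · rcases mul_eq_zero.mp hsum with h | h <;> omega
    · intro i _ hij
      have := Fin.val_ne_of_ne hij
      by_cases hi : (i : ℕ) = b ∨ (i : ℕ) = b + 1
      · exact mul_eq_zero_of_right _ (by omega)
      · simp [not_imp_comm.mp (hμ i) hi, not_imp_comm.mp (hν i) hi]
    · simp
  · rw [not_imp_comm.mp (hμ j) hj, not_imp_comm.mp (hν j) hj]

theorem IsBalanced.eq_of_degree_eq_of_weight_eq {μ ν : Fin n →₀ ℕ} (hμ : IsBalanced μ)
    (hν : IsBalanced ν) (hdeg : μ.degree = ν.degree)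
    (hwt : Finsupp.weight Fin.val μ = Finsupp.weight Fin.val ν) : μ = ν := by
  by_cases h0 : μ = 0
  · subst h0
    exact ((Finsupp.degree_eq_zero_iff ν).mp (by rw [← hdeg, map_zero])).symm
  · have h0' : ν ≠ 0 := by
      rintro rfl
      exact h0 ((Finsupp.degree_eq_zero_iff μ).mp (by rw [hdeg, map_zero]))
    obtain ⟨b, hb, hμb⟩ := hμ.exists_forall_eq_or_eq h0
    obtain ⟨c, hc, hνc⟩ := hν.exists_forall_eq_or_eq h0'
    have hbc : (b : ℕ) = c := by
      rw [← weight_val_div_degree hb hμb, ← weight_val_div_degree hc hνc, hdeg, hwt]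
    exact GammaVariety.eq_of_degree_eq_of_weight_eq hμb (hbc ▸ hνc) hdeg hwt

/-- The exponent vectors of the monomials divisible by no `m_a m_b m_{c+1}` with `a < b < c`;
these are the monomials of greatest squared weight `∑ μᵢ i²` in the `3 × 3` minors of `G`. -/
def IsStandard (μ : Fin (d + 1) →₀ ℕ) : Prop :=
  ∀ ⦃a b c : Fin d⦄, a < b → b < c → μ a.castSucc = 0 ∨ μ b.castSucc = 0 ∨ μ c.succ = 0

theorem IsStandard.isBalanced_erase {μ : Fin (d + 1) →₀ ℕ} (hμ : IsStandard μ) {a : Fin (d + 1)}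
    (ha : μ a ≠ 0) (hlow : ∀ i < a, μ i = 0) : IsBalanced (μ.erase a) := by
  intro i j hi hj
  by_contra! hij
  have hia : i ≠ a := by rintro rfl; simp at hi
  have hja : j ≠ a := by rintro rfl; simp at hj
  rw [Finsupp.erase_ne hia] at hi
  rw [Finsupp.erase_ne hja] at hj
  have hai : a < i := hia.symm.lt_of_le (not_lt.mp fun h => hi (hlow i h))
  obtain ⟨a, rfl⟩ := Fin.exists_castSucc_eq.mpr (hai.trans_le i.le_last).ne
  have hlt : i < j := Fin.lt_def.mpr (by omega)
  obtain ⟨i, rfl⟩ := Fin.exists_castSucc_eq.mpr (hlt.trans_le j.le_last).ne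
  obtain ⟨j, rfl⟩ := Fin.exists_succ_eq.mpr (Fin.ne_zero_of_lt hlt)
  rw [Fin.val_succ, Fin.val_castSucc] at hij
  rcases hμ (Fin.castSucc_lt_castSucc_iff.mp hai) (Fin.lt_def.mpr (by omega) : i < j)
    with h | h | h
  exacts [ha h, hi h, hj h]

theorem IsStandard.eq_of_degree_eq_of_weight_eq {μ ν : Fin (d + 1) →₀ ℕ} (hμ : IsStandard μ)
    (hν : IsStandard ν) {a : Fin (d + 1)} (hμlow : ∀ i < a, μ i = 0) (hνlow : ∀ i < a, ν i = 0)
    (ha : μ a ≠ 0) (hμν : μ a = ν a) (hdeg : μ.degree = ν.degree)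
    (hwt : Finsupp.weight Fin.val μ = Finsupp.weight Fin.val ν) : μ = ν := by
  rw [← Finsupp.erase_add_single a μ, ← Finsupp.erase_add_single a ν, hμν] at hdeg hwt ⊢
  simp only [map_add, add_left_inj] at hdeg hwt
  rw [(hμ.isBalanced_erase ha hμlow).eq_of_degree_eq_of_weight_eq
    (hν.isBalanced_erase (hμν ▸ ha) hνlow) hdeg hwt]

theorem degree_eq_add_sum_Ioi {μ : Fin n →₀ ℕ} {a : Fin n} (hlow : ∀ i < a, μ i = 0) :
    μ.degree = μ a + ∑ i ∈ Finset.Ioi a, μ i := by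
  rw [Finsupp.degree_eq_sum, Finset.add_sum_Ioi_eq_sum_Ici]
  refine (Finset.sum_subset (Finset.subset_univ _) fun i _ hi => hlow i ?_).symm
  simpa using hi

theorem exists_forall_sum_Ioi_lt {T : Finset (Fin (d + 1) →₀ ℕ)} (hT : T.Nonempty) {D w : ℕ}
    (hstd : ∀ μ ∈ T, IsStandard μ) (hdeg : ∀ μ ∈ T, μ.degree = D)
    (hwt : ∀ μ ∈ T, Finsupp.weight Fin.val μ = w) :
    ∃ a, ∃ μ ∈ T, ∀ ν ∈ T, ν ≠ μ → ∑ i ∈ Finset.Ioi a, μ i < ∑ i ∈ Finset.Ioi a, ν i := by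
  by_cases hsupp : ∃ a, ∃ ν ∈ T, ν a ≠ 0
  · obtain ⟨a, ⟨ν₀, hν₀, hν₀a⟩, hmin⟩ := exists_minimal_of_wellFoundedLT _ hsupp
    have hlow (ν) (hν : ν ∈ T) (i) (hi : i < a) : ν i = 0 := by
      by_contra h
      exact hi.not_ge (hmin ⟨ν, hν, h⟩ hi.le)
    obtain ⟨μ, hμ, hmax⟩ := T.exists_max_image (fun ν => ν a) hT
    have hμa : μ a ≠ 0 := ((Nat.pos_of_ne_zero hν₀a).trans_le (hmax ν₀ hν₀)).ne'
    refine ⟨a, μ, hμ, fun ν hν hne => ?_⟩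
    have hdegμν : μ.degree = ν.degree := (hdeg μ hμ).trans (hdeg ν hν).symm
    have hlt : ν a < μ a := (hmax ν hν).lt_of_ne fun h => hne
      ((hstd μ hμ).eq_of_degree_eq_of_weight_eq (hstd ν hν) (hlow μ hμ) (hlow ν hν) hμa h.symm
        hdegμν ((hwt μ hμ).trans (hwt ν hν).symm)).symm
    rw [degree_eq_add_sum_Ioi (hlow μ hμ), degree_eq_add_sum_Ioi (hlow ν hν)] at hdegμν
    omega
  · push Not at hsupp
    obtain ⟨μ, hμ⟩ := hT
    refine ⟨0, μ, hμ, fun ν hν hne => absurd (Finsupp.ext fun i => ?_) hne⟩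
    rw [hsupp i ν hν, hsupp i μ hμ]

theorem linearIndepOn_shapePolynomial (R : Type*) [CommRing R] [IsDomain R] [CharZero R]
    (D w : ℕ) :
    LinearIndepOn R (shapePolynomial R)
      {μ : Fin (d + 1) →₀ ℕ |
        IsStandard μ ∧ μ.degree = D ∧ Finsupp.weight Fin.val μ = w} := by
  refine linearIndepOn_of_forall_exists_rootMultiplicity_lt
    (fun μ _ => shapePolynomial_ne_zero μ) fun T hT hne => ?_
  obtain ⟨a, μ, hμ, hlt⟩ := exists_forall_sum_Ioi_lt hne (fun μ hμ => (hT hμ).1)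
    (fun μ hμ => (hT hμ).2.1) (fun μ hμ => (hT hμ).2.2)
  refine ⟨-(a : R), μ, hμ, fun ν hν hνμ => ?_⟩
  simpa only [rootMultiplicity_neg_natCast_shapePolynomial] using hlt ν hν hνμ

end ExponentVectors

section GammaIdeal

variable {d : ℕ}

theorem gammaMoment_eq (k θ : ℂ) (n : ℕ) :
    gammaMoment k θ n = θ ^ n * (ascPochhammer ℂ n).eval k := by
  induction n with
  | zero => simp [gammaMoment]
  | succ n ih =>
    rw [gammaMoment, ih, ascPochhammer_succ_eval]
    ring

/-- The affine cone over the gamma moment parameterization. -/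
def gammaCone (d : ℕ) : Set (Fin (d + 1) → ℂ) :=
  {x | ∃ t k θ : ℂ, x = fun i : Fin (d + 1) => t * gammaMoment k θ i}

theorem mem_vanishingIdeal_gammaCone {f : MvPolynomial (Fin (d + 1)) ℂ} :
    f ∈ vanishingIdeal ℂ (gammaCone d) ↔
      ∀ t k θ : ℂ, eval (fun i : Fin (d + 1) => t * gammaMoment k θ i.val) f = 0 := by
  rw [mem_vanishingIdeal_iff]
  constructor
  · exact fun h t k θ => h _ ⟨t, k, θ, rfl⟩
  · rintro h _ ⟨t, k, θ, rfl⟩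
    exact h t k θ

theorem gammaMatrix_apply (r : Fin 3) (c : Fin d) :
    gammaMatrix d r c = ![C (c : ℂ) * X c.castSucc, X c.castSucc, X c.succ] r :=
  rfl

theorem vecMul_map_gammaMatrix (t k θ : ℂ) :
    Matrix.vecMul ![θ, θ * k, -1] ((gammaMatrix d).map
      (eval fun i : Fin (d + 1) => t * gammaMoment k θ i)) = 0 := by
  ext c
  simp only [Matrix.vecMul, dotProduct, Fin.sum_univ_three, Matrix.map_apply, gammaMatrix_apply,
    Matrix.cons_val, map_mul, map_natCast, eval_X, Fin.val_castSucc, Fin.val_succ, gammaMoment,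
    Pi.zero_apply]
  ring

theorem gammaIdeal_le_vanishingIdeal : gammaIdeal d ≤ vanishingIdeal ℂ (gammaCone d) := by
  refine Ideal.span_le.mpr ?_
  rintro _ ⟨s, -, rfl⟩
  refine mem_vanishingIdeal_gammaCone.mpr fun t k θ => ?_
  rw [RingHom.map_det]
  refine Matrix.exists_vecMul_eq_zero_iff.mp
    ⟨![θ, θ * k, -1], fun h => by simpa using congrFun h 2, ?_⟩
  ext c
  exact congrFun (vecMul_map_gammaMatrix t k θ) (s c)

theorem det_submatrix_gammaMatrix (s : Fin 3 → Fin d) :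
    ((gammaMatrix d).submatrix id s).det =
      C ((s 0 : ℂ) - s 1) * (X (s 0).castSucc * X (s 1).castSucc * X (s 2).succ)
      - C ((s 0 : ℂ) - s 2) * (X (s 0).castSucc * X (s 2).castSucc * X (s 1).succ)
      + C ((s 1 : ℂ) - s 2) * (X (s 1).castSucc * X (s 2).castSucc * X (s 0).succ) := by
  rw [Matrix.det_fin_three]
  simp only [Matrix.submatrix_apply, id_eq, gammaMatrix_apply, Matrix.cons_val, C_sub]
  ring

theorem mul_X_mul_X_mul_X_mem {W : Submodule ℂ (MvPolynomial (Fin (d + 1)) ℂ)}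
    (hW : (gammaIdeal d).restrictScalars ℂ ≤ W) {a b c : Fin d} (hab : a < b) (hbc : b < c)
    (p : MvPolynomial (Fin (d + 1)) ℂ)
    (hb : p * (X a.castSucc * X c.castSucc * X b.succ) ∈ W)
    (ha : p * (X b.castSucc * X c.castSucc * X a.succ) ∈ W) :
    p * (X a.castSucc * X b.castSucc * X c.succ) ∈ W := by
  have hs : StrictMono ![a, b, c] := by
    rw [Fin.strictMono_iff_lt_succ, Fin.forall_fin_two]
    exact ⟨hab, hbc⟩
  have hdet : p * ((gammaMatrix d).submatrix id ![a, b, c]).det ∈ W :=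
    hW (Ideal.mul_mem_left _ p (Ideal.subset_span ⟨_, hs, rfl⟩))
  have hne : (a : ℂ) - b ≠ 0 :=
    sub_ne_zero.mpr (Nat.cast_injective.ne (Fin.val_ne_of_ne hab.ne))
  have hsolve : ((a : ℂ) - b) • (p * (X a.castSucc * X b.castSucc * X c.succ)) =
      p * ((gammaMatrix d).submatrix id ![a, b, c]).det
      + ((a : ℂ) - c) • (p * (X a.castSucc * X c.castSucc * X b.succ))
      - ((b : ℂ) - c) • (p * (X b.castSucc * X c.castSucc * X a.succ)) := by
    simp only [det_submatrix_gammaMatrix, smul_eq_C_mul, Matrix.cons_val]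
    ring
  rw [← W.smul_mem_iff hne, hsolve]
  exact W.sub_mem (W.add_mem hdet (W.smul_mem _ hb)) (W.smul_mem _ ha)

theorem exists_eq_add_single_of_not_isStandard {μ : Fin (d + 1) →₀ ℕ} (hμ : ¬IsStandard μ) :
    ∃ a b c : Fin d, a < b ∧ b < c ∧ ∃ ν : Fin (d + 1) →₀ ℕ, μ = ν +
      (.single a.castSucc 1 + .single b.castSucc 1 + .single c.succ 1) := by
  simp only [IsStandard, not_forall, not_or] at hμ
  obtain ⟨a, b, c, hab, hbc, ha, hb, hc⟩ := hμ
  refine ⟨a, b, c, hab, hbc, _, (tsub_add_cancel_of_le fun i => ?_).symm⟩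
  have hab' : a.castSucc ≠ b.castSucc := by simpa using hab.ne
  have hac : a.castSucc ≠ c.succ := (Fin.castSucc_lt_succ_iff.mpr (hab.trans hbc).le).ne
  have hbc' : b.castSucc ≠ c.succ := (Fin.castSucc_lt_succ_iff.mpr hbc.le).ne
  simp only [Finsupp.add_apply, Finsupp.single_apply]
  grind

theorem monomial_add_single_add_single_add_single {R σ : Type*} [CommSemiring R] (ν : σ →₀ ℕ)
    (x y z : σ) :
    monomial (ν + (.single x 1 + .single y 1 + .single z 1)) (1 : R) =
      monomial ν 1 * (X x * X y * X z) := by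
  simp only [X, monomial_mul, mul_one]

theorem monomial_mem_gammaIdeal_sup (μ : Fin (d + 1) →₀ ℕ) :
    monomial μ 1 ∈ (gammaIdeal d).restrictScalars ℂ ⊔ restrictSupport ℂ {ν | IsStandard ν} := by
  -- Replacing the greatest term of a minor by the other two lowers `∑ μᵢ i²`.
  induction h : Finsupp.weight (fun i : Fin (d + 1) => (i : ℕ) ^ 2) μ
    using Nat.strong_induction_on generalizing μ with | _ N ih
  by_cases hμ : IsStandard μ
  · exact Submodule.mem_sup_right ((monomial_mem_restrictSupport ℂ).mpr (.inl hμ))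
  · obtain ⟨a, b, c, hab, hbc, ν, rfl⟩ := exists_eq_add_single_of_not_isStandard hμ
    rw [monomial_add_single_add_single_add_single]
    subst h
    rw [Fin.lt_def] at hab hbc
    refine mul_X_mul_X_mul_X_mem le_sup_left hab hbc _ ?_ ?_ <;>
      rw [← monomial_add_single_add_single_add_single] <;>
      refine ih _ ?_ _ rfl <;>
      simp only [map_add, Finsupp.weight_single, one_smul, Fin.val_castSucc, Fin.val_succ] <;>
      nlinarith

theorem gammaIdeal_sup_restrictSupport :
    (gammaIdeal d).restrictScalars ℂ ⊔ restrictSupport ℂ {ν | IsStandard ν} = ⊤ := by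
  refine eq_top_iff.mpr fun f _ => ?_
  rw [f.as_sum]
  refine Submodule.sum_mem _ fun μ _ => ?_
  rw [← mul_one (coeff μ f), ← smul_eq_mul, ← smul_monomial]
  exact Submodule.smul_mem _ _ (monomial_mem_gammaIdeal_sup μ)

theorem eval_bihomogeneousComponent_eq_zero {f : MvPolynomial (Fin (d + 1)) ℂ}
    (hf : f ∈ vanishingIdeal ℂ (gammaCone d)) (D w : ℕ) (k : ℂ) :
    eval (fun i : Fin (d + 1) => (ascPochhammer ℂ i).eval k)
      (weightedHomogeneousComponent Fin.val w (homogeneousComponent D f)) = 0 := by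
  refine eval_weightedHomogeneousComponent_eq_zero _ (fun θ => ?_) w
  refine eval_weightedHomogeneousComponent_eq_zero _ (fun t => ?_) D
  simpa only [Pi.one_apply, pow_one, gammaMoment_eq] using mem_vanishingIdeal_gammaCone.mp hf t k θ

theorem eq_zero_of_mem_vanishingIdeal_of_mem_restrictSupport {f : MvPolynomial (Fin (d + 1)) ℂ}
    (hf : f ∈ vanishingIdeal ℂ (gammaCone d))
    (hstd : f ∈ restrictSupport ℂ {ν | IsStandard ν}) : f = 0 := by
  classical
  ext μ
  set g := weightedHomogeneousComponent Fin.val (Finsupp.weight Fin.val μ)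
    (homogeneousComponent μ.degree f) with hg
  have hcoeff (ν : Fin (d + 1) →₀ ℕ) : coeff ν g =
      if ν.degree = μ.degree ∧ Finsupp.weight Fin.val ν = Finsupp.weight Fin.val μ
      then coeff ν f else 0 := by
    simp only [hg, coeff_weightedHomogeneousComponent, coeff_homogeneousComponent]
    grind
  have hsum : ∑ ν ∈ g.support, coeff ν g • shapePolynomial ℂ ν = 0 :=
    Polynomial.funext fun k => by
      rw [← eval_eval_ascPochhammer, eval_bihomogeneousComponent_eq_zero hf, Polynomial.eval_zero]
  have hsupp : ↑g.support ⊆ {ν : Fin (d + 1) →₀ ℕ | IsStandard ν ∧ ν.degree = μ.degree ∧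
      Finsupp.weight Fin.val ν = Finsupp.weight Fin.val μ} := by
    intro ν hν
    simp only [Finset.mem_coe, mem_support_iff, hcoeff, ne_eq, ite_eq_right_iff, not_forall] at hν
    exact ⟨hstd (mem_support_iff.mpr hν.2), hν.1⟩
  have hμ := linearIndepOn_iff'.mp (linearIndepOn_shapePolynomial ℂ _ _) _ _ hsupp hsum μ
  by_contra h
  have : coeff μ g = coeff μ f := by rw [hcoeff, if_pos ⟨rfl, rfl⟩]
  exact h (by rw [coeff_zero, ← this]; exact hμ (mem_support_iff.mpr (this ▸ h)))

end GammaIdeal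

end GammaVariety

/-- For `d ≥ 3`, a polynomial vanishes on the affine cone over the gamma moment
parameterization iff it lies in the determinantal ideal `I₃(G)`. -/
theorem gamma_vanishingIdeal (d : ℕ) (hd : 3 ≤ d) (f : MvPolynomial (Fin (d + 1)) ℂ) :
    (∀ t k θ : ℂ, eval (fun i : Fin (d + 1) => t * gammaMoment k θ i.val) f = 0) ↔
      f ∈ gammaIdeal d := by
  have heq : (gammaIdeal d).restrictScalars ℂ =
      (vanishingIdeal ℂ (GammaVariety.gammaCone d)).restrictScalars ℂ := by
    refine eq_of_le_of_inf_le_of_le_sup (z := restrictSupport ℂ {ν | GammaVariety.IsStandard ν})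
      GammaVariety.gammaIdeal_le_vanishingIdeal ?_ ?_
    · rintro g ⟨hvanish, hstd⟩
      rw [GammaVariety.eq_zero_of_mem_vanishingIdeal_of_mem_restrictSupport hvanish hstd]
      exact zero_mem _
    · rw [GammaVariety.gammaIdeal_sup_restrictSupport]
      exact le_top
  rw [← GammaVariety.mem_vanishingIdeal_gammaCone, ← Submodule.restrictScalars_injective ℂ _ _ heq]
end

section
/- For every integer d ≥ 3, the quotient ring ℂ[m_0,…,m_d]/I_3(G) has Krull dimension 3. -/
open MvPolynomial

/-!
A point `m` kills all maximal minors exactly when `G(m)` has a nonzero left kernel vector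
`(v₀, v₁, v₂)`, that is, when `(v₀ (c - 1) + v₁) m_{c-1} + v₂ m_c = 0` for all `c`. If `v₂ ≠ 0`,
this is a first-order recurrence, so `m` is a polynomial function of `m_0` and the two ratios
`v₀ / v₂`, `v₁ / v₂`. If `v₂ = 0`, the factor `v₀ (c - 1) + v₁` vanishes for at most one `c`, so
`m` has at most two nonzero coordinates. Applied to points over the residue fields of the quotient
ring, this bounds their transcendence degrees, hence the dimension, by `3`. Conversely, the
parametrization by `(x, y, z)` found for `v₂ ≠ 0` and its restrictions to `x = 0`, to `x = y = 0`
and to `x = y = z = 0` have kernels forming a strictly increasing chain of four primes; the first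
three are separated from their successors by `m_0 m_2 - m_1 ^ 2`, `m_1` and `m_0`.
-/

open scoped Matrix

universe u

section MaximalMinors

/-- The ideal generated by the maximal minors of a matrix `M` with `n` rows, i.e. by the
determinants of the submatrices given by `n` columns in increasing order. -/
def maxMinorsIdeal {R ι : Type*} [CommRing R] [Preorder ι] {n : ℕ} (M : Matrix (Fin n) ι R) :
    Ideal R :=
  Ideal.span {p | ∃ s : Fin n → ι, StrictMono s ∧ p = (M.submatrix id s).det}

theorem exists_strictMono_det_submatrix_ne_zero {K ι : Type*} [Field K] [LinearOrder ι]
    [Finite ι] {n : ℕ} {M : Matrix (Fin n) ι K} (hM : LinearIndependent K M.row) :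
    ∃ s : Fin n → ι, StrictMono s ∧ (M.submatrix id s).det ≠ 0 := by
  obtain ⟨κ, a, ha, hspan, hli⟩ := exists_linearIndependent' K M.col
  let : LinearOrder κ := LinearOrder.lift' a ha
  cases nonempty_fintype ι
  let : Fintype κ := Fintype.ofInjective a ha
  have hcard : Fintype.card κ = n := by
    rw [← finrank_span_eq_card hli, hspan, ← Matrix.rank_eq_finrank_span_cols, hM.rank_matrix,
      Fintype.card_fin]
  let e : Fin n ≃o κ := Fintype.orderIsoFinOfCardEq κ hcard
  have ha_mono : StrictMono a := fun _ _ h => h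
  refine ⟨a ∘ e, ha_mono.comp e.strictMono, ?_⟩
  have hcols : LinearIndependent K (M.submatrix id (a ∘ e)).col := hli.comp e e.injective
  exact ((Matrix.isUnit_iff_isUnit_det _).1
    (Matrix.linearIndependent_cols_iff_isUnit.1 hcols)).ne_zero

theorem exists_vecMul_eq_zero_of_maxMinorsIdeal_le_ker {R K ι : Type*} [CommRing R] [Field K]
    [LinearOrder ι] [Finite ι] {n : ℕ} {M : Matrix (Fin n) ι R} {f : R →+* K}
    (hf : maxMinorsIdeal M ≤ RingHom.ker f) : ∃ v ≠ 0, v ᵥ* M.map f = 0 := by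
  by_contra! hker
  have hinj : Function.Injective (M.map f).vecMulLinear :=
    (injective_iff_map_eq_zero _).2 fun v hv => by_contra fun hne => hker v hne hv
  obtain ⟨s, hs, hdet⟩ :=
    exists_strictMono_det_submatrix_ne_zero (Matrix.vecMul_injective_iff.1 hinj)
  have hmem : (M.submatrix id s).det ∈ RingHom.ker f := hf (Ideal.subset_span ⟨s, hs, rfl⟩)
  rw [RingHom.mem_ker, RingHom.map_det] at hmem
  exact hdet hmem

theorem maxMinorsIdeal_le_ker_of_vecMul_eq_zero {R D ι : Type*} [CommRing R] [CommRing D]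
    [IsDomain D] [Preorder ι] {n : ℕ} {M : Matrix (Fin n) ι R} {f : R →+* D} {v : Fin n → D}
    (hv : v ≠ 0) (hvM : v ᵥ* M.map f = 0) : maxMinorsIdeal M ≤ RingHom.ker f := by
  refine Ideal.span_le.2 ?_
  rintro _ ⟨s, -, rfl⟩
  rw [SetLike.mem_coe, RingHom.mem_ker, RingHom.map_det]
  exact Matrix.exists_vecMul_eq_zero_iff.1 ⟨v, hv, funext fun c => congrFun hvM (s c)⟩

end MaximalMinors

section KrullDimension

theorem ringKrullDim_le_of_isIntegral {R S : Type*} [CommRing R] [CommRing S] {f : R →+* S}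
    (hf : f.IsIntegral) : ringKrullDim S ≤ ringKrullDim R := by
  algebraize [f]
  exact Order.krullDim_le_of_strictMono (PrimeSpectrum.comap f) fun I J hIJ =>
    Ideal.IsIntegral.comap_lt_comap (R := R) (I := I.asIdeal) (J := J.asIdeal) hIJ

theorem ringKrullDim_le_of_trdeg_quotient_le {k A : Type*} [Field k] [CommRing A] [Algebra k A]
    [Algebra.FiniteType k A] {n : ℕ}
    (h : ∀ P : Ideal A, P.IsPrime → Algebra.trdeg k (A ⧸ P) ≤ n) : ringKrullDim A ≤ n := by
  nontriviality A
  obtain ⟨s, g, hinj, hint⟩ := exists_integral_inj_algHom_of_fg k A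
  obtain ⟨P, hP⟩ := RingHom.IsIntegral.comap_surjective hint hinj ⊥
  have hinjP : Function.Injective ((Ideal.Quotient.mkₐ k P.asIdeal).comp g) := by
    rw [injective_iff_map_eq_zero]
    intro p hp
    have hmem : p ∈ (PrimeSpectrum.comap g.toRingHom P).asIdeal :=
      (Ideal.Quotient.eq_zero_iff_mem (I := P.asIdeal)).1 hp
    rwa [hP] at hmem
  have hsn : s ≤ n := by
    have := (lift_trdeg_le_of_injective _ hinjP).trans
      (Cardinal.lift_le.2 (h P.asIdeal P.isPrime))
    simpa using this
  calc ringKrullDim A ≤ ringKrullDim (MvPolynomial (Fin s) k) :=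
        ringKrullDim_le_of_isIntegral hint
    _ = s := by simp [MvPolynomial.ringKrullDim_of_isNoetherianRing]
    _ ≤ n := by exact_mod_cast hsn

theorem trdeg_adjoin_range_le {k A : Type*} [CommRing k] [IsDomain k] [CommRing A] [Algebra k A]
    {n : ℕ} (x : Fin n → A) : Algebra.trdeg k (Algebra.adjoin k (Set.range x)) ≤ n := by
  rw [Algebra.adjoin_range_eq_range_aeval]
  simpa using lift_trdeg_le_of_surjective _ (aeval (R := k) x).rangeRestrict_surjective

theorem ringKrullDim_le_of_range_le_adjoin {k : Type*} {A : Type u} [Field k] [CommRing A]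
    [Algebra k A] [Algebra.FiniteType k A] {n : ℕ}
    (h : ∀ (K : Type u) [Field K] [Algebra k K] (f : A →ₐ[k] K),
      ∃ x : Fin n → K, f.range ≤ Algebra.adjoin k (Set.range x)) : ringKrullDim A ≤ n := by
  refine ringKrullDim_le_of_trdeg_quotient_le (k := k) fun P hP => ?_
  let j : A ⧸ P →ₐ[k] FractionRing (A ⧸ P) := IsScalarTower.toAlgHom k _ _
  obtain ⟨x, hx⟩ := h _ (j.comp (Ideal.Quotient.mkₐ k P))
  have hj : ∀ b, j b ∈ Algebra.adjoin k (Set.range x) :=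
    Ideal.Quotient.mk_surjective.forall.2 fun a => hx ⟨a, rfl⟩
  exact (trdeg_le_of_injective (j.codRestrict _ hj) ((AlgHom.injective_codRestrict _ _ _).2
    (IsFractionRing.injective (A ⧸ P) _))).trans (trdeg_adjoin_range_le x)

theorem le_ringKrullDim_quotient_of_strictMono {R : Type*} [CommRing R] {I : Ideal R} {n : ℕ}
    {P : Fin (n + 1) → Ideal R} (hprime : ∀ i, (P i).IsPrime) (hmono : StrictMono P)
    (hI : I ≤ P 0) : (n : WithBot ℕ∞) ≤ ringKrullDim (R ⧸ I) := by
  rw [ringKrullDim_quotient]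
  let chain : LTSeries (PrimeSpectrum.zeroLocus (I : Set R)) := LTSeries.mk n
    (fun i => ⟨⟨P i, hprime i⟩, hI.trans (hmono.monotone (Fin.zero_le i))⟩) fun _ _ h => hmono h
  exact Order.le_krullDim_iff.2 ⟨chain, rfl⟩

theorem ker_lt_ker_comp {R S T : Type*} [CommRing R] [CommRing S] [CommRing T] {f : R →+* S}
    {g : S →+* T} {r : R} (hf : f r ≠ 0) (hgf : g (f r) = 0) :
    RingHom.ker f < RingHom.ker (g.comp f) :=
  SetLike.lt_iff_le_and_exists.2
    ⟨fun a (ha : f a = 0) => by simp [RingHom.mem_ker, ha], r, hgf, hf⟩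

end KrullDimension

section Recurrence

/-- The `3 × d` matrix with columns `(a_c m_c, m_c, m_{c+1})ᵀ`. A vector `(v₀, v₁, v₂)` is in its
left kernel if and only if `m` satisfies the recurrence `(v₀ a_c + v₁) m_c + v₂ m_{c+1} = 0`. -/
def recurrenceMatrix {R : Type*} [CommRing R] {d : ℕ} (a : Fin d → R) (m : Fin (d + 1) → R) :
    Matrix (Fin 3) (Fin d) R :=
  Matrix.of ![fun c => a c * m c.castSucc, fun c => m c.castSucc, fun c => m c.succ]

theorem recurrenceMatrix_map {R S : Type*} [CommRing R] [CommRing S] {d : ℕ} (f : R →+* S)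
    (a : Fin d → R) (m : Fin (d + 1) → R) :
    (recurrenceMatrix a m).map f = recurrenceMatrix (f ∘ a) (f ∘ m) := by
  ext r c
  fin_cases r <;> simp [recurrenceMatrix]

theorem vecMul_recurrenceMatrix_eq_zero_iff {R : Type*} [CommRing R] {d : ℕ} {a : Fin d → R}
    {m : Fin (d + 1) → R} {v : Fin 3 → R} :
    v ᵥ* recurrenceMatrix a m = 0 ↔
      ∀ c, (v 0 * a c + v 1) * m c.castSucc + v 2 * m c.succ = 0 := by
  simp only [funext_iff, Matrix.vecMul, dotProduct, Fin.sum_univ_three, recurrenceMatrix,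
    Matrix.of_apply, Matrix.cons_val, Pi.zero_apply, add_mul, mul_assoc]

/-- The solution `z, z (a₀ x + y), z (a₀ x + y) (a₁ x + y), …` of the recurrence
`m_{c+1} = (a_c x + y) m_c`, for `t = (x, y, z)`. -/
def recurrenceSolution {R : Type*} [CommRing R] {d : ℕ} (a : Fin d → R) (t : Fin 3 → R)
    (i : Fin (d + 1)) : R :=
  t 2 * Fin.partialProd (fun c => a c * t 0 + t 1) i

@[simp]
theorem recurrenceSolution_zero {R : Type*} [CommRing R] {d : ℕ} (a : Fin d → R)
    (t : Fin 3 → R) : recurrenceSolution a t 0 = t 2 := by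
  simp [recurrenceSolution]

theorem recurrenceSolution_succ {R : Type*} [CommRing R] {d : ℕ} (a : Fin d → R)
    (t : Fin 3 → R) (c : Fin d) :
    recurrenceSolution a t c.succ = (a c * t 0 + t 1) * recurrenceSolution a t c.castSucc := by
  simp only [recurrenceSolution, Fin.partialProd_succ]
  ring

theorem recurrenceSolution_one {R : Type*} [CommRing R] {d : ℕ} (a : Fin (d + 1) → R)
    (t : Fin 3 → R) : recurrenceSolution a t 1 = (a 0 * t 0 + t 1) * t 2 := by
  simpa using recurrenceSolution_succ a t 0

theorem recurrenceSolution_two {R : Type*} [CommRing R] {d : ℕ} (a : Fin (d + 2) → R)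
    (t : Fin 3 → R) :
    recurrenceSolution a t 2 = (a 1 * t 0 + t 1) * ((a 0 * t 0 + t 1) * t 2) := by
  simpa [recurrenceSolution_one] using recurrenceSolution_succ a t 1

theorem map_recurrenceSolution {R S : Type*} [CommRing R] [CommRing S] {d : ℕ} (f : R →+* S)
    (a : Fin d → R) (t : Fin 3 → R) (i : Fin (d + 1)) :
    f (recurrenceSolution a t i) = recurrenceSolution (f ∘ a) (f ∘ t) i := by
  induction i using Fin.induction with
  | zero => simp
  | succ c ih => simp [recurrenceSolution_succ, ih]

theorem eq_recurrenceSolution_of_forall_succ {R : Type*} [CommRing R] {d : ℕ} {a : Fin d → R}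
    {m : Fin (d + 1) → R} {x y : R} (hm : ∀ c, m c.succ = (a c * x + y) * m c.castSucc) :
    m = recurrenceSolution a ![x, y, m 0] := by
  funext i
  induction i using Fin.induction with
  | zero => simp
  | succ c ih => simp [recurrenceSolution_succ, hm, ← ih]

theorem recurrenceSolution_mem_adjoin {k A : Type*} [CommRing k] [CommRing A] [Algebra k A] {d : ℕ}
    (a : Fin d → k) (t : Fin 3 → A) (i : Fin (d + 1)) :
    recurrenceSolution (algebraMap k A ∘ a) t i ∈ Algebra.adjoin k (Set.range t) := by
  have ht : ∀ j, t j ∈ Algebra.adjoin k (Set.range t) := fun j =>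
    Algebra.subset_adjoin ⟨j, rfl⟩
  induction i using Fin.induction with
  | zero => simpa using ht 2
  | succ c ih =>
    rw [recurrenceSolution_succ]
    exact mul_mem (add_mem (mul_mem (Subalgebra.algebraMap_mem _ _) (ht 0)) (ht 1)) ih

theorem vecMul_recurrenceMatrix_recurrenceSolution {R : Type*} [CommRing R] {d : ℕ}
    (a : Fin d → R) (t : Fin 3 → R) :
    ![t 0, t 1, -1] ᵥ* recurrenceMatrix a (recurrenceSolution a t) = 0 := by
  rw [vecMul_recurrenceMatrix_eq_zero_iff]
  intro c
  simp [recurrenceSolution_succ, mul_comm]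

theorem exists_support_subset_of_vecMul_recurrenceMatrix_eq_zero {R : Type*} [CommRing R]
    [IsDomain R] {d : ℕ} {a : Fin d → R} (ha : Function.Injective a) {m : Fin (d + 1) → R}
    {v : Fin 3 → R} (hv : v ≠ 0) (hv2 : v 2 = 0) (hvm : v ᵥ* recurrenceMatrix a m = 0) :
    ∃ i, Function.support m ⊆ {i, Fin.last d} := by
  rw [vecMul_recurrenceMatrix_eq_zero_iff] at hvm
  have hfactor : ∀ c : Fin d, m c.castSucc ≠ 0 → v 0 * a c + v 1 = 0 := fun c hc => by
    simpa [hv2, hc] using hvm c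
  have hunique : ∀ c c' : Fin d, m c.castSucc ≠ 0 → m c'.castSucc ≠ 0 → c = c' := by
    intro c c' hc hc'
    by_contra hne
    have hv0 : v 0 = 0 := by
      have hmul : v 0 * (a c - a c') = 0 := by
        linear_combination hfactor c hc - hfactor c' hc'
      exact (mul_eq_zero.1 hmul).resolve_right (sub_ne_zero.2 (ha.ne hne))
    have hv1 : v 1 = 0 := by simpa [hv0] using hfactor c hc
    exact hv (funext (Fin.forall_fin_succ.2 ⟨hv0, Fin.forall_fin_two.2 ⟨hv1, hv2⟩⟩))
  by_cases hex : ∃ c : Fin d, m c.castSucc ≠ 0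
  · obtain ⟨c, hc⟩ := hex
    refine ⟨c.castSucc, Fin.lastCases (by simp) fun c' hc' => ?_⟩
    simp [hunique c' c hc' hc]
  · push Not at hex
    exact ⟨Fin.last d, Fin.lastCases (by simp) fun c hc => absurd (hex c) hc⟩

theorem exists_eq_recurrenceSolution_of_vecMul_recurrenceMatrix_eq_zero {K : Type*} [Field K]
    {d : ℕ} {a : Fin d → K} {m : Fin (d + 1) → K} {v : Fin 3 → K} (hv2 : v 2 ≠ 0)
    (hvm : v ᵥ* recurrenceMatrix a m = 0) : ∃ t, m = recurrenceSolution a t := by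
  rw [vecMul_recurrenceMatrix_eq_zero_iff] at hvm
  refine ⟨_, eq_recurrenceSolution_of_forall_succ (x := -(v 0 / v 2)) (y := -(v 1 / v 2)) ?_⟩
  intro c
  field_simp
  linear_combination hvm c

end Recurrence

section RecurrenceIdeal

variable {k : Type*} [CommRing k] {d : ℕ}

/-- The ideal of maximal minors of the recurrence matrix with constant weights `a` and
indeterminate entries `m`. -/
noncomputable def recurrenceIdeal (a : Fin d → k) : Ideal (MvPolynomial (Fin (d + 1)) k) :=
  maxMinorsIdeal (recurrenceMatrix (C ∘ a) X)

theorem recurrenceMatrix_X_map {A : Type*} [CommRing A] [Algebra k A] (a : Fin d → k)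
    (m : Fin (d + 1) → A) :
    (recurrenceMatrix (C ∘ a) X).map (aeval m : MvPolynomial (Fin (d + 1)) k →ₐ[k] A).toRingHom =
      recurrenceMatrix (algebraMap k A ∘ a) m := by
  rw [recurrenceMatrix_map]
  congr 1 <;> ext <;> simp

/-- The homomorphism parametrizing the solutions of the recurrences `m_{c+1} = (a_c x + y) m_c`
by `t = (x, y, z)` with `z = m_0`. -/
noncomputable def recurrenceHom {A : Type*} [CommRing A] [Algebra k A] (a : Fin d → k)
    (t : Fin 3 → A) : MvPolynomial (Fin (d + 1)) k →ₐ[k] A :=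
  aeval (recurrenceSolution (algebraMap k A ∘ a) t)

theorem recurrenceHom_X {A : Type*} [CommRing A] [Algebra k A] (a : Fin d → k) (t : Fin 3 → A)
    (i : Fin (d + 1)) :
    recurrenceHom a t (X i) = recurrenceSolution (algebraMap k A ∘ a) t i :=
  aeval_X _ i

theorem recurrenceHom_X_zero_mul_X_two_sub_X_one_sq {A : Type*} [CommRing A] [Algebra k A]
    (a : Fin (d + 2) → k) (t : Fin 3 → A) :
    recurrenceHom a t (X 0 * X 2 - X 1 ^ 2) =
      algebraMap k A (a 1 - a 0) * t 0 * (algebraMap k A (a 0) * t 0 + t 1) * t 2 ^ 2 := by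
  simp only [map_sub, map_mul, map_pow, recurrenceHom_X, recurrenceSolution_zero,
    recurrenceSolution_one, recurrenceSolution_two, Function.comp_apply]
  ring

theorem comp_recurrenceHom {A B : Type*} [CommRing A] [Algebra k A] [CommRing B] [Algebra k B]
    (e : A →ₐ[k] B) (a : Fin d → k) (t : Fin 3 → A) :
    e.comp (recurrenceHom a t) = recurrenceHom a (e ∘ t) := by
  ext i
  have hcomp : e ∘ algebraMap k A ∘ a = algebraMap k B ∘ a := by ext; simp
  simpa [recurrenceHom, hcomp] using map_recurrenceSolution e.toRingHom (algebraMap k A ∘ a) t i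

theorem recurrenceIdeal_le_ker_recurrenceHom {D : Type*} [CommRing D] [IsDomain D] [Algebra k D]
    (a : Fin d → k) (t : Fin 3 → D) :
    recurrenceIdeal a ≤ RingHom.ker (recurrenceHom a t).toRingHom := by
  refine maxMinorsIdeal_le_ker_of_vecMul_eq_zero (v := ![t 0, t 1, -1])
    (fun h => by simpa using congrFun h 2) ?_
  rw [recurrenceHom, recurrenceMatrix_X_map]
  exact vecMul_recurrenceMatrix_recurrenceSolution _ t

/-- The indeterminates `X₀, …, X_{n-1}` with the first `i` of them replaced by `0`. -/
noncomputable def truncatedVars (k : Type*) [CommRing k] {n : ℕ} (i : Fin (n + 1)) (j : Fin n) :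
    MvPolynomial (Fin n) k :=
  if j.castSucc < i then 0 else X j

theorem aeval_truncatedVars_comp_truncatedVars {n : ℕ} {i i' : Fin (n + 1)} (h : i ≤ i') :
    aeval (truncatedVars k i') ∘ truncatedVars k i = truncatedVars k i' := by
  funext j
  by_cases hj : j.castSucc < i
  · simp [truncatedVars, hj, hj.trans_le h]
  · simp [truncatedVars, hj]

theorem recurrenceHom_truncatedVars_zero_ne_zero {a : Fin (d + 2) → k} (ha : a 0 ≠ a 1) :
    recurrenceHom a (truncatedVars k 0) (X 0 * X 2 - X 1 ^ 2) ≠ 0 := by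
  intro h
  -- The evaluation point is chosen so that `m₀ = m₁ = 1` and `m₂ = 1 + (a₁ - a₀)`.
  have heval := congrArg (aeval ![1, 1 - a 0, 1] : _ →ₐ[k] k) h
  rw [← AlgHom.comp_apply, comp_recurrenceHom,
    recurrenceHom_X_zero_mul_X_two_sub_X_one_sq] at heval
  have hdiff : a 1 - a 0 = 0 := by simpa [truncatedVars] using heval
  exact ha (sub_eq_zero.1 hdiff).symm

theorem exists_recurrenceHom_truncatedVars_ne_zero {a : Fin (d + 2) → k} (ha : a 0 ≠ a 1)
    (i : Fin 3) : ∃ p, recurrenceHom a (truncatedVars k i.castSucc) p ≠ 0 ∧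
      recurrenceHom a (truncatedVars k i.succ) p = 0 := by
  have : Nontrivial k := ⟨⟨_, _, ha⟩⟩
  fin_cases i
  · refine ⟨_, recurrenceHom_truncatedVars_zero_ne_zero ha, ?_⟩
    rw [recurrenceHom_X_zero_mul_X_two_sub_X_one_sq]
    simp [truncatedVars]
  · exact ⟨X 1, by simp [recurrenceHom_X, recurrenceSolution_one, truncatedVars]⟩
  · exact ⟨X 0, by simp [recurrenceHom_X, truncatedVars]⟩

theorem strictMono_ker_recurrenceHom_truncatedVars {a : Fin (d + 2) → k} (ha : a 0 ≠ a 1) :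
    StrictMono fun i : Fin 4 => RingHom.ker (recurrenceHom a (truncatedVars k i)).toRingHom := by
  refine Fin.strictMono_iff_lt_succ.2 fun i => ?_
  obtain ⟨p, hp, hp'⟩ := exists_recurrenceHom_truncatedVars_ne_zero ha i
  have hcomp : (aeval (truncatedVars k i.succ)).comp
      (recurrenceHom a (truncatedVars k i.castSucc)) =
        recurrenceHom a (truncatedVars k i.succ) := by
    rw [comp_recurrenceHom, aeval_truncatedVars_comp_truncatedVars i.castSucc_lt_succ.le]
  rw [← hcomp] at hp' ⊢
  exact ker_lt_ker_comp hp hp'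

theorem three_le_ringKrullDim_quotient_recurrenceIdeal [IsDomain k] {a : Fin (d + 2) → k}
    (ha : a 0 ≠ a 1) :
    3 ≤ ringKrullDim (MvPolynomial (Fin (d + 3)) k ⧸ recurrenceIdeal a) :=
  le_ringKrullDim_quotient_of_strictMono (fun _ => RingHom.ker_isPrime _)
    (strictMono_ker_recurrenceHom_truncatedVars ha) (recurrenceIdeal_le_ker_recurrenceHom a _)

end RecurrenceIdeal

section Dimension

variable {k : Type*} [Field k] {d : ℕ}

theorem exists_adjoin_range_le_adjoin {K : Type*} [Field K] [Algebra k K]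
    {a : Fin d → k} (ha : Function.Injective a) {m : Fin (d + 1) → K}
    (hm : recurrenceIdeal a ≤ RingHom.ker (aeval m : _ →ₐ[k] K).toRingHom) :
    ∃ x : Fin 3 → K, Algebra.adjoin k (Set.range m) ≤ Algebra.adjoin k (Set.range x) := by
  obtain ⟨v, hv, hvm⟩ := exists_vecMul_eq_zero_of_maxMinorsIdeal_le_ker hm
  rw [recurrenceMatrix_X_map] at hvm
  simp only [Algebra.adjoin_le_iff, Set.range_subset_iff]
  by_cases hv2 : v 2 = 0
  · obtain ⟨i, hi⟩ := exists_support_subset_of_vecMul_recurrenceMatrix_eq_zero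
      ((algebraMap k K).injective.comp ha) hv hv2 hvm
    refine ⟨![m i, m (Fin.last d), 0], fun j => ?_⟩
    by_cases hj : m j = 0
    · rw [hj]
      exact zero_mem _
    · rcases hi hj with rfl | rfl
      · exact Algebra.subset_adjoin ⟨0, rfl⟩
      · exact Algebra.subset_adjoin ⟨1, rfl⟩
  · obtain ⟨t, rfl⟩ := exists_eq_recurrenceSolution_of_vecMul_recurrenceMatrix_eq_zero hv2 hvm
    exact ⟨t, recurrenceSolution_mem_adjoin a t⟩

theorem ringKrullDim_quotient_recurrenceIdeal_le {a : Fin d → k} (ha : Function.Injective a) :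
    ringKrullDim (MvPolynomial (Fin (d + 1)) k ⧸ recurrenceIdeal a) ≤ 3 := by
  refine ringKrullDim_le_of_range_le_adjoin (k := k) (n := 3) fun K _ _ f => ?_
  let φ := f.comp (Ideal.Quotient.mkₐ k (recurrenceIdeal a))
  have hφ : φ = aeval (φ ∘ X) := aeval_unique φ
  have hker : recurrenceIdeal a ≤ RingHom.ker φ.toRingHom := fun p hp => by
    simp [φ, RingHom.mem_ker, Ideal.Quotient.eq_zero_iff_mem.2 hp]
  rw [hφ] at hker
  obtain ⟨x, hx⟩ := exists_adjoin_range_le_adjoin ha hker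
  rw [Algebra.adjoin_range_eq_range_aeval, ← hφ] at hx
  refine ⟨x, ?_⟩
  rintro _ ⟨b, rfl⟩
  obtain ⟨p, rfl⟩ := Ideal.Quotient.mk_surjective b
  exact hx ⟨p, rfl⟩

theorem gamma_krullDim_general (hd : 2 ≤ d) {a : Fin d → k} (ha : Function.Injective a) :
    ringKrullDim (MvPolynomial (Fin (d + 1)) k ⧸ recurrenceIdeal a) = 3 := by
  obtain ⟨d, rfl⟩ := Nat.exists_eq_add_of_le' hd
  exact le_antisymm (ringKrullDim_quotient_recurrenceIdeal_le ha)
    (three_le_ringKrullDim_quotient_recurrenceIdeal (ha.ne (by simp)))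

end Dimension

theorem gammaMatrix_eq_recurrenceMatrix (d : ℕ) :
    gammaMatrix d = recurrenceMatrix (C ∘ fun c : Fin d => (c : ℂ)) X := by
  ext1 r c
  fin_cases r <;> rfl

theorem gammaIdeal_eq_recurrenceIdeal (d : ℕ) :
    gammaIdeal d = recurrenceIdeal fun c : Fin d => (c : ℂ) := by
  rw [recurrenceIdeal, ← gammaMatrix_eq_recurrenceMatrix]
  rfl

/-- For `d ≥ 3`, the quotient ring `ℂ[m₀,…,m_d]/I₃(G)` has Krull dimension `3`. -/
theorem gamma_krullDim (d : ℕ) (hd : 3 ≤ d) :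
    ringKrullDim (MvPolynomial (Fin (d + 1)) ℂ ⧸ gammaIdeal d) = 3 := by
  rw [gammaIdeal_eq_recurrenceIdeal]
  exact gamma_krullDim_general (by lia) (Nat.cast_injective.comp Fin.val_injective)
end

section
/- Let d ≥ 3 and let I = I_3(G) ⊆ S = ℂ[m_0,…,m_d]. For every natural number n, the dimension over ℂ of the n-th graded piece of S/I equals C(n+2,2) + (d−2)·C(n+1,2) + C(d−1,2)·C(n,2), where C(a,b) denotes the binomial coefficient (with C(a,b) = 0 when a < b). Equivalently, the Hilbert series of S/I is (1 + (d−2)t + C(d−1,2)t²)/(1−t)³; in particular S/I has degree C(d,2). -/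
open MvPolynomial

/-!
Let `G` be the `3 × d` matrix with columns `(a_c m_c, m_c, m_{c+1})ᵀ`, `0 ≤ c < d`, for pairwise
distinct nodes `a_c`.

*Upper bound.* The minor on the columns `i < j < k` rewrites `m_{i+1} m_j m_k` as a combination of
`m_i m_{j+1} m_k` and `m_i m_j m_{k+1}`.  Both of these are more spread out: they have a smaller sum
of `c (d - c)` over the indices `c` of the variables, because that function is strictly concave.
What remains modulo the minors are the standard monomials `m_0^A m_k^q m_d^B` and
`m_0^A m_i m_k^q m_d^B` with `0 < i < k < d`.

*Lower bound.* The substitution `m_c ↦ w^c ∏_{i<c} (y - a_i)` turns the third row of `G` into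
`w` times the combination `y · (row 2) - (row 1)`, so it kills the minors.  A standard monomial goes
to a power of `w` times a polynomial in `y`.  Among those with the same power of `w`, the
polynomials are triangular with respect to the order of vanishing at the nodes `a_k`, so all images
are linearly independent.

Counting the standard monomials according to whether their part without `m_0` and `m_d` is a power
of `m_1`, a nontrivial power of another `m_k`, or divisible by two different variables, gives the
three summands.
-/

section
variable {K V ι α : Type*}

theorem linearIndependent_of_notMem_of_lt_mem [DivisionRing K] [AddCommGroup V] [Module K V]
    [LinearOrder α] {v : ι → V} {o : ι → α} (ho : Function.Injective o) (N : ι → Submodule K V)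
    (hv : ∀ i, v i ∉ N i) (hlt : ∀ i j, o i < o j → v j ∈ N i) : LinearIndependent K v := by
  classical
  rw [linearIndependent_iff']
  intro s c hsum
  by_contra! hne
  obtain ⟨i, hi, hmin⟩ := (s.filter (c · ≠ 0)).exists_min_image o
    (Finset.filter_nonempty_iff.mpr hne)
  obtain ⟨his, hci⟩ := Finset.mem_filter.mp hi
  have hrest : ∑ j ∈ s.erase i, c j • v j ∈ N i := Submodule.sum_mem _ fun j hj => by
    obtain ⟨hji, hjs⟩ := Finset.mem_erase.mp hj
    by_cases hcj : c j = 0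
    · simp [hcj]
    · have hle := hmin j (Finset.mem_filter.mpr ⟨hjs, hcj⟩)
      exact (N i).smul_mem _ (hlt i j (hle.lt_of_ne fun h => hji (ho h).symm))
  rw [← Finset.add_sum_erase _ _ his] at hsum
  rw [← neg_mem_iff, ← eq_neg_of_add_eq_zero_left hsum, Submodule.smul_mem_iff _ hci] at hrest
  exact hv i hrest

theorem finrank_quotient_comap_subtype_eq_card [Ring K] [StrongRankCondition K]
    [AddCommGroup V] [Module K V]
    {W : Type*} [AddCommGroup W] [Module K W] {U N : Submodule K V} {f : V →ₗ[K] W} {b : ι → V}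
    (hf : N ≤ LinearMap.ker f) (hli : LinearIndependent K (f ∘ b)) (hb : ∀ i, b i ∈ U)
    (hU : U ≤ Submodule.span K (Set.range b) ⊔ N) :
    Module.finrank K (U ⧸ N.comap U.subtype) = Nat.card ι := by
  have hker : LinearMap.ker (N.mkQ ∘ₗ U.subtype) = N.comap U.subtype := by
    rw [LinearMap.ker_comp, Submodule.ker_mkQ]
  have hrange : LinearMap.range (N.mkQ ∘ₗ U.subtype) =
      Submodule.span K (Set.range (N.mkQ ∘ b)) := by
    rw [LinearMap.range_comp, Submodule.range_subtype, Set.range_comp, ← Submodule.map_span]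
    refine le_antisymm ((Submodule.map_mono hU).trans ?_) (Submodule.map_mono ?_)
    · simp [Submodule.map_sup]
    · exact Submodule.span_le.mpr (Set.range_subset_iff.mpr hb)
  have hli' : LinearIndependent K (N.mkQ ∘ b) :=
    LinearIndependent.of_comp (N.liftQ f hf) hli
  rw [← hker, (LinearMap.quotKerEquivRange _).finrank_eq, hrange,
    Module.finrank_eq_nat_card_basis (Module.Basis.span hli')]

theorem exists_eq_replicate_add_add_replicate (m : Multiset α) (x y : α) :
    ∃ A l B, m = Multiset.replicate A x + l + Multiset.replicate B y ∧ ∀ z ∈ l, z ≠ x ∧ z ≠ y := by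
  classical
  refine ⟨m.count x, (m.filter (¬ · = x)).filter (¬ · = y), (m.filter (¬ · = x)).count y, ?_, ?_⟩
  · rw [← Multiset.filter_eq', ← Multiset.filter_eq', add_assoc,
      add_comm (Multiset.filter (¬ · = y) _), Multiset.filter_add_not, Multiset.filter_add_not]
  · simp +contextual

theorem exists_eq_replicate_or_eq_cons_replicate [LinearOrder α] {m : Multiset α} (hm : m ≠ 0)
    (h : ∀ x y z, x ≤ y → y < z → ¬ ({x, y, z} : Multiset α) ≤ m) :
    ∃ z q, m = Multiset.replicate (q + 1) z ∨
      ∃ x < z, m = x ::ₘ Multiset.replicate (q + 1) z := by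
  obtain ⟨z, hz, hmax⟩ := m.toFinset.exists_max_image id (by simpa using hm)
  simp only [Multiset.mem_toFinset, id] at hz hmax
  obtain ⟨l, rfl⟩ := Multiset.exists_cons_of_mem hz
  by_cases hl : ∀ x ∈ l, x = z
  · refine ⟨z, l.card, Or.inl ?_⟩
    rw [Multiset.replicate_succ, ← Multiset.eq_replicate_card.mpr hl]
  push Not at hl
  obtain ⟨x, hx, hxz⟩ := hl
  obtain ⟨l, rfl⟩ := Multiset.exists_cons_of_mem hx
  replace hmax : ∀ y ∈ x ::ₘ l, y ≤ z := fun y hy => hmax y (Multiset.mem_cons_of_mem hy)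
  have hl : ∀ y ∈ l, y = z := by
    intro y hy
    by_contra hyz
    obtain ⟨l, rfl⟩ := Multiset.exists_cons_of_mem hy
    have hxz' := (hmax x hx).lt_of_ne hxz
    have hyz' := (hmax y (Multiset.mem_cons_of_mem hy)).lt_of_ne hyz
    have hle (x y : α) : ({x, y, z} : Multiset α) ≤ z ::ₘ x ::ₘ y ::ₘ l := by
      rw [Multiset.cons_swap z x, Multiset.cons_swap z y]
      simp [Multiset.insert_eq_cons, Multiset.cons_le_cons_iff]
    rcases le_total x y with hxy | hyx
    · exact h x y z hxy hyz' (hle x y)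
    · exact h y x z hyx hxz' (Multiset.cons_swap x y l ▸ hle y x)
  refine ⟨z, l.card, Or.inr ⟨x, (hmax x hx).lt_of_ne hxz, ?_⟩⟩
  rw [Multiset.cons_swap, Multiset.replicate_succ, ← Multiset.eq_replicate_card.mpr hl]
end

theorem nat_card_subtype_fst_lt_snd (n : ℕ) :
    Nat.card {p : Fin n × Fin n // p.1 < p.2} = n.choose 2 := by
  have hcard (i : Fin n) : Nat.card {j : Fin n // i < j} = n - 1 - i := by
    rw [Nat.card_eq_fintype_card, Fintype.card_subtype, Finset.filter_lt_eq_Ioi, Fin.card_Ioi]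
  rw [Nat.card_congr (Equiv.subtypeProdEquivSigmaSubtype fun i j : Fin n => i < j), Nat.card_sigma]
  simp only [hcard]
  rw [Fin.sum_univ_eq_sum_range (fun i => n - 1 - i) n, Finset.sum_range_reflect (fun i => i) n,
    Finset.sum_range_id, Nat.choose_two_right]

section Monomials
variable {σ K : Type*} [CommSemiring K]

theorem isHomogeneous_prod_map_X (m : Multiset σ) :
    (m.map (X : σ → MvPolynomial σ K)).prod.IsHomogeneous m.card := by
  induction m using Multiset.induction with
  | empty => simpa using isHomogeneous_one σ K
  | cons c m ih =>
    rw [Multiset.map_cons, Multiset.prod_cons, Multiset.card_cons, add_comm]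
    exact (isHomogeneous_X K c).mul ih

theorem homogeneousSubmodule_le_span_prod_map_X (n : ℕ) :
    homogeneousSubmodule σ K n ≤
      Submodule.span K {p | ∃ m : Multiset σ, m.card = n ∧ (m.map X).prod = p} := by
  intro p hp
  rw [p.as_sum]
  refine Submodule.sum_mem _ fun s hs => ?_
  have hdeg : s.degree = n := by
    rw [Finsupp.degree_eq_weight_one]
    exact hp (mem_support_iff.mp hs)
  have hprod : (s.toMultiset.map (X : σ → MvPolynomial σ K)).prod = monomial s 1 := by
    rw [monomial_eq, C_1, one_mul, Finsupp.toMultiset_map, Finsupp.prod_toMultiset,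
      Finsupp.prod_mapDomain_index (by simp) (by simp [pow_add])]
  rw [← mul_one (coeff s p), ← smul_eq_mul, ← smul_monomial, ← hprod]
  exact Submodule.smul_mem _ _ (Submodule.subset_span ⟨_, by simpa [Finsupp.card_toMultiset], rfl⟩)
end Monomials

section NodeMatrix
variable {K : Type*} {d : ℕ}

/-- The matrix with columns `(a_c m_c, m_c, m_{c+1})ᵀ`, which is `gammaMatrix d` for the nodes
`a_c = c`. -/
noncomputable def nodeMatrix [CommSemiring K] (a : Fin d → K) :
    Matrix (Fin 3) (Fin d) (MvPolynomial (Fin (d + 1)) K) :=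
  Matrix.of fun r c => ![C (a c) * X c.castSucc, X c.castSucc, X c.succ] r

/-- The ideal of maximal minors of `nodeMatrix a`, written as in `gammaIdeal`. -/
noncomputable def nodeIdeal [CommRing K] (a : Fin d → K) : Ideal (MvPolynomial (Fin (d + 1)) K) :=
  Ideal.span {p | ∃ s : Fin 3 → Fin d, StrictMono s ∧ p = ((nodeMatrix a).submatrix id s).det}

theorem det_nodeMatrix_submatrix [CommRing K] (a : Fin d → K) (s : Fin 3 → Fin d) :
    ((nodeMatrix a).submatrix id s).det =
      C (a (s 1) - a (s 2)) * (X (s 0).succ * X (s 1).castSucc * X (s 2).castSucc) +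
      C (a (s 2) - a (s 0)) * (X (s 0).castSucc * X (s 1).succ * X (s 2).castSucc) +
      C (a (s 0) - a (s 1)) * (X (s 0).castSucc * X (s 1).castSucc * X (s 2).succ) := by
  simp only [Matrix.det_fin_three, nodeMatrix, Matrix.submatrix_apply, Matrix.of_apply, id, C_sub,
    Matrix.cons_val_zero, Matrix.cons_val_one, Matrix.cons_val]
  ring

/-- The Newton basis polynomial `∏_{i < c} (y - a_i)`. -/
noncomputable def nodePoly [CommRing K] (a : Fin d → K) (c : Fin (d + 1)) : Polynomial K :=
  Lagrange.nodal {i | i.castSucc < c} a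

/-- The substitution `m_c ↦ w^c ∏_{i < c} (y - a_i)`, whose kernel contains the minors.  In
`Polynomial (Polynomial K)` the outer variable is `w` and the inner one is `y`. -/
noncomputable def nodeHom [CommRing K] (a : Fin d → K) :
    MvPolynomial (Fin (d + 1)) K →ₐ[K] Polynomial (Polynomial K) :=
  aeval fun c => Polynomial.monomial c (nodePoly a c)

section CommRing
variable [CommRing K] (a : Fin d → K)

@[simp]
theorem nodePoly_zero : nodePoly a 0 = 1 := by
  simp [nodePoly]

theorem nodePoly_succ (c : Fin d) :
    nodePoly a c.succ = (Polynomial.X - Polynomial.C (a c)) * nodePoly a c.castSucc := by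
  have hinsert : Finset.univ.filter (fun i : Fin d => i.castSucc < c.succ) =
      insert c (Finset.univ.filter fun i => i.castSucc < c.castSucc) := by
    ext i
    simp [le_iff_eq_or_lt]
  rw [nodePoly, hinsert, Lagrange.nodal_insert_eq_nodal (by simp), nodePoly]

theorem X_sub_C_dvd_nodePoly {k : Fin d} {c : Fin (d + 1)} (hk : k.castSucc < c) :
    Polynomial.X - Polynomial.C (a k) ∣ nodePoly a c :=
  Lagrange.X_sub_C_dvd_nodal a (by simpa)

theorem nodeHom_det_submatrix (s : Fin 3 → Fin d) :
    nodeHom a ((nodeMatrix a).submatrix id s).det = 0 := by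
  have hsucc (c : Fin d) : nodeHom a (X c.succ) =
      Polynomial.X * Polynomial.C (Polynomial.X - Polynomial.C (a c)) *
        nodeHom a (X c.castSucc) := by
    simp only [nodeHom, aeval_X, nodePoly_succ, ← Polynomial.C_mul_X_pow_eq_monomial, map_mul,
      Fin.val_succ, Fin.val_castSucc, pow_succ]
    ring
  have hC (z : K) : nodeHom a (C z) = Polynomial.C (Polynomial.C z) :=
    (nodeHom a).commutes z
  rw [det_nodeMatrix_submatrix]
  simp only [map_add, map_mul, map_sub, hC, hsucc]
  ring

theorem nodeIdeal_le_ker_nodeHom : nodeIdeal a ≤ RingHom.ker (nodeHom a) := by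
  refine Ideal.span_le.mpr ?_
  rintro _ ⟨s, -, rfl⟩
  exact nodeHom_det_submatrix a s
end CommRing

section IsDomain
variable [CommRing K] [IsDomain K] {a : Fin d → K}

theorem eval_nodePoly_ne_zero (ha : Function.Injective a) {k : Fin d} {c : Fin (d + 1)}
    (hc : c ≤ k.castSucc) : (nodePoly a c).eval (a k) ≠ 0 := by
  refine Lagrange.eval_nodal_not_at_node fun i hi hki => ?_
  have hic : i.castSucc < c := by simpa using hi
  exact (hic.trans_le hc).ne (congrArg Fin.castSucc (ha hki).symm)

theorem not_X_sub_C_pow_succ_dvd_nodePoly_last (ha : Function.Injective a) (k : Fin d) (B : ℕ)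
    {f : Polynomial K} (hf : f.eval (a k) ≠ 0) :
    ¬ (Polynomial.X - Polynomial.C (a k)) ^ (B + 1) ∣ nodePoly a (Fin.last d) ^ B * f := by
  have hlast : nodePoly a (Fin.last d) = (Polynomial.X - Polynomial.C (a k)) *
      Lagrange.nodal (Finset.univ.erase k) a := by
    rw [← Lagrange.nodal_eq_mul_nodal_erase (Finset.mem_univ k), nodePoly]
    simp [Fin.castSucc_lt_last]
  rw [hlast, mul_pow, pow_succ, mul_assoc,
    mul_dvd_mul_iff_left (pow_ne_zero _ (Polynomial.X_sub_C_ne_zero _)),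
    Polynomial.dvd_iff_isRoot, Polynomial.IsRoot, Polynomial.eval_mul, Polynomial.eval_pow]
  refine mul_ne_zero (pow_ne_zero _ (Lagrange.eval_nodal_not_at_node fun i hi h => ?_)) hf
  exact Finset.ne_of_mem_erase hi (ha h).symm

end IsDomain

theorem exists_sub_smul_add_smul_mem_nodeIdeal [Field K] {a : Fin d → K}
    (ha : Function.Injective a) {i j k : Fin d} (hij : i < j) (hjk : j < k) :
    ∃ u v : K, X i.succ * X j.castSucc * X k.castSucc -
      (u • (X i.castSucc * X j.succ * X k.castSucc) +
        v • (X i.castSucc * X j.castSucc * X k.succ)) ∈ nodeIdeal a := by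
  have hmono : StrictMono ![i, j, k] := by
    simp [Fin.strictMono_iff_lt_succ, Fin.forall_fin_two, hij, hjk]
  have hdet : ((nodeMatrix a).submatrix id ![i, j, k]).det ∈ nodeIdeal a :=
    Ideal.subset_span ⟨_, hmono, rfl⟩
  have hne : a j - a k ≠ 0 := sub_ne_zero.mpr (ha.ne hjk.ne)
  refine ⟨-((a j - a k)⁻¹ * (a k - a i)), -((a j - a k)⁻¹ * (a i - a j)), ?_⟩
  have hmem := Ideal.mul_mem_left _ (C (a j - a k)⁻¹) hdet
  rw [det_nodeMatrix_submatrix] at hmem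
  have hinv : (C (a j - a k)⁻¹ * C (a j - a k) : MvPolynomial (Fin (d + 1)) K) = 1 := by
    rw [← C_mul, inv_mul_cancel₀ hne, C_1]
  convert hmem using 1
  simp only [smul_eq_C_mul, C_neg, C_mul, Matrix.cons_val_zero, Matrix.cons_val_one,
    Matrix.cons_val]
  linear_combination (-(X i.succ * X j.castSucc * X k.castSucc)) * hinv
end NodeMatrix

section
variable {K : Type*} [CommRing K]

/-- The polynomials in `w` over `K[y]` whose coefficient at `w ^ N` vanishes at `y = x` to order at
least `r`. -/
noncomputable def coeffVanishing (N : ℕ) (x : K) (r : ℕ) :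
    Submodule K (Polynomial (Polynomial K)) :=
  ((Ideal.span {(Polynomial.X - Polynomial.C x) ^ r}).restrictScalars K).comap
    ((Polynomial.lcoeff (Polynomial K) N).restrictScalars K)

theorem mem_coeffVanishing {N : ℕ} {x : K} {r : ℕ} {f : Polynomial (Polynomial K)} :
    f ∈ coeffVanishing N x r ↔ (Polynomial.X - Polynomial.C x) ^ r ∣ f.coeff N := by
  rw [← Ideal.mem_span_singleton]
  rfl
end

/-- The exponent data of a standard monomial `m_0^A m_low m_mid^q m_d^B` of degree `n`, for a matrix
with `d = e + 2` columns, where `A`, `q`, `B` are `firstExp`, `midExp`, `lastExp`.  The value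
`low = 0` encodes that the factor `m_low` is absent, and `mid = 1` is imposed when `q = 0` to make
the encoding unique. -/
@[ext]
structure StandardMonomial (e n : ℕ) where
  firstExp : ℕ
  midExp : ℕ
  lastExp : ℕ
  low : Fin (e + 2)
  mid : Fin (e + 2)
  low_lt_mid : low < mid
  mid_eq_one : midExp = 0 → mid = 1
  degree_eq : firstExp + (if low = 0 then 0 else 1) + midExp + lastExp = n

namespace StandardMonomial

variable {e n : ℕ}

/-- The exponent of `m_low`, which is `0` when `low = 0` encodes its absence. -/
def lowExp (s : StandardMonomial e n) : ℕ := if s.low = 0 then 0 else 1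

/-- The indices of the variables of a standard monomial, with multiplicity. -/
def toMultiset (s : StandardMonomial e n) : Multiset (Fin (e + 3)) :=
  .replicate s.firstExp 0 + .replicate s.lowExp s.low.castSucc +
    .replicate s.midExp s.mid.castSucc + .replicate s.lastExp (Fin.last _)

@[simp]
theorem card_toMultiset (s : StandardMonomial e n) : s.toMultiset.card = n := by
  simpa [toMultiset, lowExp] using s.degree_eq

/-- The parametrisation used to count standard monomials.  The three summands correspond to
`mid = 1`, to `low = 0` with `mid ≥ 2`, and to `low ≥ 1`.  The exponents `A + q + B = N` are encoded
by the pair `B < B + q + 1` below `N + 2`; in the last two summands `q ≥ 1`, and the pair is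
`B < B + q` below `N + 1`. -/
def ofPairs :
    {p : Fin (n + 2) × Fin (n + 2) // p.1 < p.2} ⊕
      Fin e × {p : Fin (n + 1) × Fin (n + 1) // p.1 < p.2} ⊕
      {p : Fin (e + 1) × Fin (e + 1) // p.1 < p.2} × {p : Fin n × Fin n // p.1 < p.2} →
    StandardMonomial e n
  | .inl ⟨(u, v), huv⟩ =>
    have huv : u.val < v.val := huv
    ⟨n + 1 - v, v - u - 1, u, 0, 1, Fin.zero_lt_one, fun _ => rfl, by
      rw [if_pos rfl]; omega⟩
  | .inr (.inl (k, ⟨(u, v), huv⟩)) =>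
    have huv : u.val < v.val := huv
    ⟨n - v, v - u, u, 0, k.succ.succ, Fin.succ_pos _, by omega, by
      rw [if_pos rfl]; omega⟩
  | .inr (.inr (⟨(i, k), hik⟩, ⟨(u, v), huv⟩)) =>
    have huv : u.val < v.val := huv
    ⟨n - 1 - v, v - u, u, i.succ, k.succ, Fin.succ_lt_succ_iff.mpr hik, by omega, by
      rw [if_neg (Fin.succ_ne_zero i)]; omega⟩

theorem ofPairs_injective : Function.Injective (ofPairs (e := e) (n := n)) := by
  rintro (⟨⟨u, v⟩, huv⟩ | ⟨k, ⟨⟨u, v⟩, huv⟩⟩ | ⟨⟨⟨c, k⟩, hck⟩, ⟨⟨u, v⟩, huv⟩⟩)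
    (⟨⟨u', v'⟩, huv'⟩ | ⟨k', ⟨⟨u', v'⟩, huv'⟩⟩ | ⟨⟨⟨c', k'⟩, hck'⟩, ⟨⟨u', v'⟩, huv'⟩⟩) h <;>
  simp only [ofPairs, StandardMonomial.mk.injEq, Fin.ext_iff, Fin.val_succ, Fin.val_zero,
    Fin.val_one, Fin.lt_def] at h huv huv' <;>
  simp only [Sum.inl.injEq, Sum.inr.injEq, Prod.mk.injEq, Subtype.mk.injEq, Fin.ext_iff,
    reduceCtorEq] <;>
  omega

theorem ofPairs_surjective : Function.Surjective (ofPairs (e := e) (n := n)) := by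
  rintro ⟨A, q, B, i, k, hik, hk, hn⟩
  rcases Fin.eq_zero_or_eq_succ i with rfl | ⟨i, rfl⟩
  · rw [if_pos rfl] at hn
    by_cases hk1 : k = 1
    · refine ⟨.inl ⟨(⟨B, by omega⟩, ⟨B + q + 1, by omega⟩), Fin.mk_lt_mk.mpr (by omega)⟩, ?_⟩
      ext <;> simp only [ofPairs, hk1] <;> omega
    · obtain ⟨k, rfl⟩ := Fin.exists_succ_eq.mpr hik.ne'
      obtain ⟨k, rfl⟩ := Fin.exists_succ_eq.mpr fun h : k = 0 => hk1 (h ▸ rfl)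
      refine ⟨.inr (.inl (k,
        ⟨(⟨B, by omega⟩, ⟨B + q, by omega⟩), Fin.mk_lt_mk.mpr (by omega)⟩)), ?_⟩
      ext <;> simp only [ofPairs, Fin.val_succ] <;> omega
  · rw [if_neg (Fin.succ_ne_zero i)] at hn
    obtain ⟨k, rfl⟩ := Fin.exists_succ_eq.mpr (Fin.ne_zero_of_lt hik)
    have hq : q ≠ 0 := fun hq => Fin.succ_ne_zero i ((Fin.lt_one_iff _).mp (hk hq ▸ hik))
    refine ⟨.inr (.inr (⟨(i, k), Fin.succ_lt_succ_iff.mp hik⟩,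
      ⟨(⟨B, by omega⟩, ⟨B + q, by omega⟩), Fin.mk_lt_mk.mpr (by omega)⟩)), ?_⟩
    ext <;> simp only [ofPairs, Fin.val_succ] <;> omega

theorem nat_card (e n : ℕ) :
    Nat.card (StandardMonomial e n) =
      (n + 2).choose 2 + e * (n + 1).choose 2 + (e + 1).choose 2 * n.choose 2 := by
  rw [← Nat.card_eq_of_bijective ofPairs ⟨ofPairs_injective, ofPairs_surjective⟩]
  simp only [Nat.card_sum, Nat.card_prod, nat_card_subtype_fst_lt_snd, Nat.card_fin, add_assoc]

theorem exists_toMultiset_eq {m : Multiset (Fin (e + 3))} (hm : m.card = n)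
    (hred : ∀ i j k : Fin (e + 2), i < j → j < k →
      ¬ ({i.succ, j.castSucc, k.castSucc} : Multiset (Fin (e + 3))) ≤ m) :
    ∃ s : StandardMonomial e n, s.toMultiset = m := by
  obtain ⟨A, l, B, rfl, hl⟩ := exists_eq_replicate_add_add_replicate m 0 (Fin.last _)
  have hcol : ∀ c ∈ l, ∃ k : Fin (e + 2), k ≠ 0 ∧ k.castSucc = c := fun c hc =>
    ⟨c.castPred (hl c hc).2, by simpa using (hl c hc).1, by simp⟩
  rcases eq_or_ne l 0 with rfl | hl0
  · refine ⟨⟨A, 0, B, 0, 1, Fin.zero_lt_one, fun _ => rfl, by simpa using hm⟩, ?_⟩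
    simp [toMultiset, lowExp]
  have hred' : ∀ x y z : Fin (e + 3), x ≤ y → y < z → ¬ ({x, y, z} : Multiset _) ≤ l := by
    intro x y z hxy hyz hle
    obtain ⟨j, -, rfl⟩ := hcol y (Multiset.mem_of_le hle (by simp))
    obtain ⟨k, -, rfl⟩ := hcol z (Multiset.mem_of_le hle (by simp))
    obtain ⟨i, rfl⟩ := Fin.exists_succ_eq.mpr (hl x (Multiset.mem_of_le hle (by simp))).1
    exact hred i j k (by simpa using hxy) hyz
      (hle.trans ((Multiset.le_add_left _ _).trans (Multiset.le_add_right _ _)))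
  obtain ⟨z, q, rfl | ⟨x, hxz, rfl⟩⟩ := exists_eq_replicate_or_eq_cons_replicate hl0 hred'
  · obtain ⟨k, hk, rfl⟩ := hcol z (by simp)
    refine ⟨⟨A, q + 1, B, 0, k, Fin.pos_iff_ne_zero.mpr hk, by simp, ?_⟩, ?_⟩
    · simp only [Multiset.card_add, Multiset.card_replicate, if_pos] at hm ⊢
      omega
    · simp [toMultiset, lowExp]
  · obtain ⟨k, -, rfl⟩ := hcol z (by simp)
    obtain ⟨i, hi, rfl⟩ := hcol x (by simp)
    refine ⟨⟨A, q + 1, B, i, k, hxz, by simp, ?_⟩, ?_⟩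
    · simp only [Multiset.card_add, Multiset.card_cons, Multiset.card_replicate, if_neg hi] at hm ⊢
      omega
    · simp [toMultiset, lowExp, hi, add_assoc, Multiset.cons_swap i.castSucc]

section nodeHom
variable {K : Type*}

/-- The standard monomial as a polynomial. -/
noncomputable def monomial (K : Type*) [CommSemiring K] (s : StandardMonomial e n) :
    MvPolynomial (Fin (e + 3)) K :=
  (s.toMultiset.map X).prod

theorem isHomogeneous_monomial [CommSemiring K] (s : StandardMonomial e n) :
    (s.monomial K).IsHomogeneous n := by
  have h := isHomogeneous_prod_map_X (K := K) s.toMultiset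
  rwa [card_toMultiset] at h

/-- The exponent of `w` in the image of a standard monomial under `nodeHom`. -/
def weight (s : StandardMonomial e n) : ℕ :=
  s.low + s.mid * s.midExp + (e + 2) * s.lastExp

/-- The coefficient, a polynomial in `y`, of the image of a standard monomial under `nodeHom`. -/
noncomputable def nodePart [CommRing K] (a : Fin (e + 2) → K) (s : StandardMonomial e n) :
    Polynomial K :=
  nodePoly a (Fin.last _) ^ s.lastExp *
    (nodePoly a s.mid.castSucc ^ s.midExp * nodePoly a s.low.castSucc)

theorem nodeHom_monomial [CommRing K] (a : Fin (e + 2) → K) (s : StandardMonomial e n) :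
    nodeHom a (s.monomial K) = Polynomial.monomial s.weight (s.nodePart a) := by
  have hlow : Polynomial.monomial s.low (nodePoly a s.low.castSucc) ^ s.lowExp =
      Polynomial.monomial s.low (nodePoly a s.low.castSucc) := by
    rcases eq_or_ne s.low 0 with h | h <;> simp [lowExp, h]
  simp only [monomial, toMultiset, Multiset.map_add, Multiset.prod_add, Multiset.map_replicate,
    Multiset.prod_replicate, map_mul, map_pow, nodeHom, aeval_X]
  simp only [hlow, Polynomial.monomial_pow, Polynomial.monomial_mul_monomial, weight, nodePart,
    Fin.val_zero, Fin.val_castSucc, Fin.val_last, nodePoly_zero, one_pow, zero_mul, zero_add,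
    one_mul]
  rw [mul_comm (nodePoly a (Fin.last _) ^ _), mul_comm (nodePoly a s.mid.castSucc ^ _)]

theorem X_sub_C_pow_succ_dvd_nodePart [CommRing K] (a : Fin (e + 2) → K)
    (s : StandardMonomial e n) {B : ℕ} {k : Fin (e + 2)} (hk0 : k ≠ 0)
    (h : toLex (B, k) < toLex (s.lastExp, s.mid)) :
    (Polynomial.X - Polynomial.C (a k)) ^ (B + 1) ∣ s.nodePart a := by
  have hlast := X_sub_C_dvd_nodePoly a k.castSucc_lt_last
  rcases Prod.Lex.toLex_lt_toLex.mp h with hB | ⟨hB, hk⟩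
  · exact ((pow_dvd_pow _ hB).trans (pow_dvd_pow_of_dvd hlast _)).mul_right _
  · simp only at hB hk
    have hmidExp : s.midExp ≠ 0 := fun hq =>
      hk0 ((Fin.lt_one_iff k).mp (s.mid_eq_one hq ▸ hk))
    have hmid := X_sub_C_dvd_nodePoly a (Fin.castSucc_lt_castSucc_iff.mpr hk)
    rw [pow_succ, hB, nodePart]
    exact mul_dvd_mul (pow_dvd_pow_of_dvd hlast _)
      ((hmid.trans (dvd_pow_self _ hmidExp)).mul_right _)

theorem weight_lastExp_mid_injective :
    Function.Injective fun s : StandardMonomial e n =>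
      toLex (s.weight, toLex (s.lastExp, s.mid)) := by
  intro s t h
  simp only [EmbeddingLike.apply_eq_iff_eq, Prod.mk.injEq] at h
  obtain ⟨hweight, hlast, hmid⟩ := h
  have hdivmod (r : StandardMonomial e n) : (r.low + r.mid * r.midExp : ℕ) / r.mid = r.midExp ∧
      (r.low + r.mid * r.midExp : ℕ) % r.mid = r.low :=
    (Nat.div_mod_unique (Nat.zero_lt_of_lt r.low_lt_mid)).mpr ⟨rfl, r.low_lt_mid⟩
  have hlowmid : s.low + s.mid * s.midExp = (t.low + t.mid * t.midExp : ℕ) := by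
    rw [weight, weight, hlast] at hweight
    exact Nat.add_right_cancel hweight
  have hmidExp : s.midExp = t.midExp := by
    rw [← (hdivmod s).1, ← (hdivmod t).1, hlowmid, hmid]
  have hlow : s.low = t.low := Fin.ext <| by
    rw [← (hdivmod s).2, ← (hdivmod t).2, hlowmid, hmid]
  have hfirst : s.firstExp = t.firstExp := by
    have hs := s.degree_eq
    have ht := t.degree_eq
    rw [hlast, hmidExp, hlow] at hs
    omega
  exact StandardMonomial.ext hfirst hmidExp hlast hlow hmid

theorem linearIndependent_nodeHom_monomial [Field K] {a : Fin (e + 2) → K}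
    (ha : Function.Injective a) :
    LinearIndependent K fun s : StandardMonomial e n => nodeHom a (s.monomial K) := by
  refine linearIndependent_of_notMem_of_lt_mem weight_lastExp_mid_injective
    (fun s => coeffVanishing s.weight (a s.mid) (s.lastExp + 1)) (fun s => ?_) fun s t hst => ?_
  · rw [mem_coeffVanishing, nodeHom_monomial, Polynomial.coeff_monomial_same]
    refine not_X_sub_C_pow_succ_dvd_nodePoly_last ha _ _ ?_
    rw [Polynomial.eval_mul, Polynomial.eval_pow]
    exact mul_ne_zero (pow_ne_zero _ (eval_nodePoly_ne_zero ha le_rfl))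
      (eval_nodePoly_ne_zero ha (Fin.castSucc_le_castSucc_iff.mpr s.low_lt_mid.le))
  · rw [mem_coeffVanishing, nodeHom_monomial, Polynomial.coeff_monomial]
    split_ifs with hweight
    · have hst' : toLex (s.lastExp, s.mid) < toLex (t.lastExp, t.mid) := by
        simpa [Prod.Lex.toLex_lt_toLex, hweight] using hst
      exact t.X_sub_C_pow_succ_dvd_nodePart a (Fin.ne_zero_of_lt s.low_lt_mid) hst'
    · exact dvd_zero _
end nodeHom

end StandardMonomial

section Straightening

/-- The sum of `c * (d - c)` over the indices `c` of the variables of a monomial, which decreases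
when two indices are moved apart. -/
def centrality {d : ℕ} (m : Multiset (Fin (d + 1))) : ℕ :=
  (m.map fun c => c.val * c.rev.val).sum

theorem centrality_castSucc_cons_succ_cons_lt {d : ℕ} {i j : Fin d} (hij : i < j)
    (t : Multiset (Fin (d + 1))) :
    centrality (i.castSucc ::ₘ j.succ ::ₘ t) < centrality (i.succ ::ₘ j.castSucc ::ₘ t) := by
  obtain ⟨p, hp⟩ := Nat.exists_eq_add_of_lt (Fin.lt_def.mp hij)
  obtain ⟨q, hq⟩ := Nat.exists_eq_add_of_lt j.isLt
  have hi_castSucc : i.castSucc.rev.val = p + q + 2 := by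
    rw [Fin.val_rev, Fin.val_castSucc]; omega
  have hi_succ : i.succ.rev.val = p + q + 1 := by rw [Fin.val_rev, Fin.val_succ]; omega
  have hj_castSucc : j.castSucc.rev.val = q + 1 := by rw [Fin.val_rev, Fin.val_castSucc]; omega
  have hj_succ : j.succ.rev.val = q := by rw [Fin.val_rev, Fin.val_succ]; omega
  simp only [centrality, Multiset.map_cons, Multiset.sum_cons, hi_castSucc, hi_succ, hj_castSucc,
    hj_succ, Fin.val_succ, Fin.val_castSucc, hp]
  nlinarith

theorem prod_map_X_mem_span_monomial_sup_nodeIdeal {K : Type*} [Field K] {e n : ℕ}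
    {a : Fin (e + 2) → K} (ha : Function.Injective a) {m : Multiset (Fin (e + 3))}
    (hm : m.card = n) :
    (m.map X).prod ∈ Submodule.span K (Set.range (StandardMonomial.monomial (e := e) (n := n) K)) ⊔
      (nodeIdeal a).restrictScalars K := by
  induction hr : centrality m using Nat.strong_induction_on generalizing m with | _ r ih
  subst hr
  by_cases hred : ∀ i j k : Fin (e + 2), i < j → j < k →
      ¬ ({i.succ, j.castSucc, k.castSucc} : Multiset (Fin (e + 3))) ≤ m
  · obtain ⟨s, rfl⟩ := StandardMonomial.exists_toMultiset_eq hm hred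
    exact Submodule.mem_sup_left (Submodule.subset_span ⟨s, rfl⟩)
  push Not at hred
  obtain ⟨i, j, k, hij, hjk, hle⟩ := hred
  obtain ⟨t, rfl⟩ := Multiset.le_iff_exists_add.mp hle
  obtain ⟨u, v, huv⟩ := exists_sub_smul_add_smul_mem_nodeIdeal ha hij hjk
  have hstep : _ ∈ (nodeIdeal a).restrictScalars K :=
    Ideal.mul_mem_right (t.map X).prod _ huv
  have hleft := ih (centrality ({i.castSucc, j.succ, k.castSucc} + t))
    (by simpa using centrality_castSucc_cons_succ_cons_lt hij (k.castSucc ::ₘ t))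
    (by simpa using hm) rfl
  have hright := ih (centrality ({i.castSucc, j.castSucc, k.succ} + t)) (by
    have hlt := centrality_castSucc_cons_succ_cons_lt (hij.trans hjk) (j.castSucc ::ₘ t)
    simpa [Multiset.cons_swap j.castSucc] using hlt) (by simpa using hm) rfl
  have hsum := add_mem (add_mem (Submodule.mem_sup_right hstep)
    (Submodule.smul_mem _ u hleft)) (Submodule.smul_mem _ v hright)
  convert hsum using 1
  simp only [Multiset.insert_eq_cons, Multiset.cons_add, Multiset.singleton_add,
    Multiset.map_cons, Multiset.prod_cons, smul_eq_C_mul]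
  ring
end Straightening

theorem gamma_hilbertFunction_general {K : Type*} [Field K] {d : ℕ} (hd : 2 ≤ d) {a : Fin d → K}
    (ha : Function.Injective a) (n : ℕ) :
    Module.finrank K
      (↥(homogeneousSubmodule (Fin (d + 1)) K n) ⧸
        (Submodule.comap (homogeneousSubmodule (Fin (d + 1)) K n).subtype
          (Submodule.restrictScalars K (nodeIdeal a)))) =
      Nat.choose (n + 2) 2 + (d - 2) * Nat.choose (n + 1) 2
        + Nat.choose (d - 1) 2 * Nat.choose n 2 := by
  obtain ⟨e, rfl⟩ := Nat.exists_eq_add_of_le' hd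
  have hspan : homogeneousSubmodule (Fin (e + 3)) K n ≤
      Submodule.span K (Set.range fun s : StandardMonomial e n => s.monomial K) ⊔
        (nodeIdeal a).restrictScalars K := by
    refine (homogeneousSubmodule_le_span_prod_map_X n).trans (Submodule.span_le.mpr ?_)
    rintro _ ⟨m, hm, rfl⟩
    exact prod_map_X_mem_span_monomial_sup_nodeIdeal ha hm
  rw [finrank_quotient_comap_subtype_eq_card (f := (nodeHom a).toLinearMap)
    (nodeIdeal_le_ker_nodeHom a) (StandardMonomial.linearIndependent_nodeHom_monomial ha)
    StandardMonomial.isHomogeneous_monomial hspan, StandardMonomial.nat_card]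
  rfl

/-- The Hilbert function of `S/I₃(G)`: the `n`-th graded piece `Sₙ/Iₙ` has dimension
`C(n+2,2) + (d-2)·C(n+1,2) + C(d-1,2)·C(n,2)`. -/
theorem gamma_hilbertFunction (d : ℕ) (hd : 3 ≤ d) (n : ℕ) :
    Module.finrank ℂ
      (↥(homogeneousSubmodule (Fin (d + 1)) ℂ n) ⧸
        (Submodule.comap (homogeneousSubmodule (Fin (d + 1)) ℂ n).subtype
          (Submodule.restrictScalars ℂ (gammaIdeal d)))) =
      Nat.choose (n + 2) 2 + (d - 2) * Nat.choose (n + 1) 2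
        + Nat.choose (d - 1) 2 * Nat.choose n 2 :=
  gamma_hilbertFunction_general (le_of_lt hd) (Nat.cast_injective.comp Fin.val_injective) n
end
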